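/- arXiv:1806.05903 — 2 statements merged into one kernel-verified Lean document; each statement's English description precedes it below -/
import Mathlib

section
/- For any k ∈ N and any m ∈ N_0^n with |m| ≥ 2, the polynomial Φ_k(Q_m) ∈ Z[p_{ij} : 1 ≤ i,j ≤ n] is irreducible, where Φ_k is the k-th cyclotomic polynomial. -/
/-!
The exponent vector `a` of the monomial `Q_m` is nonzero and has coprime entries, so it suffices to
show that `P(X^a)` is irreducible whenever `P ∈ ℤ[T]` is irreducible with `P(0) ≠ 0`.

Suppose `f * g = P(X^a)`. Both constant coefficients are nonzero. Every additive functional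
`ℓ : ℕ^σ → ℤ` killing `a` vanishes on the support of `P(X^a)`. The largest value of `ℓ` on the
support of a product is the sum of the largest values on the supports of the factors
(`weight_nonpos_of_mul`), and `ℓ ≥ 0` is attained on each factor at the constant term; hence
`ℓ ≤ 0` on both supports. With `ℓ(s) = a_q s_p - a_p s_q` for all `p`, `q`, every exponent `s`
of `f` or `g` is proportional to `a`, and coprimality makes it a natural multiple of `a`. Thus
`f = F(X^a)` and `g = G(X^a)` (`exists_aeval_eq_of_mul`). As `X^a` is transcendental,
`F * G = P`, so one of the factors is a unit.
-/

/-- `N(m) = gcd{m_i(m_i−1), m_j m_k : 1 ≤ i,j,k ≤ n, j < k}`. -/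
def Nnum {n : ℕ} (m : Fin n → ℕ) : ℕ :=
  Finset.gcd (Finset.univ ×ˢ Finset.univ)
    (fun p : Fin n × Fin n =>
      if p.1 = p.2 then m p.1 * (m p.1 - 1) else m p.1 * m p.2)

/-- The monomial `Q_m = Π_i p_{ii}^{m_i(m_i−1)/N(m)} · Π_{i<j} (p_{ij}p_{ji})^{m_i m_j/N(m)}`
in `ℤ[p_{ij} : 1 ≤ i,j ≤ n]`. -/
noncomputable def Qmono {n : ℕ} (m : Fin n → ℕ) : MvPolynomial (Fin n × Fin n) ℤ :=
  ∏ p ∈ Finset.univ ×ˢ Finset.univ,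
    MvPolynomial.X p ^
      (if p.1 = p.2 then m p.1 * (m p.1 - 1) / Nnum m else m p.1 * m p.2 / Nnum m)

section MonomialSubstitution

open MvPolynomial

variable {σ : Type*}

/-- If a functional is nonpositive on the exponents of `f * g`, and `g` has a nonzero constant
term, then the functional is nonpositive on the exponents of `f`: two exponents on the maximal
faces of the supports have a sum that cannot cancel in the product. -/
lemma weight_nonpos_of_mul {f g : MvPolynomial σ ℤ} (ℓ : (σ →₀ ℕ) →+ ℤ)
    (hfg : ∀ d ∈ (f * g).support, ℓ d ≤ 0) (hg : coeff 0 g ≠ 0) :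
    ∀ s ∈ f.support, ℓ s ≤ 0 := by
  classical
  intro s hs
  obtain ⟨s₁, hs₁, hmax₁⟩ := f.support.exists_max_image ℓ ⟨s, hs⟩
  have hg0 : (0 : σ →₀ ℕ) ∈ g.support := mem_support_iff.2 hg
  obtain ⟨t₁, ht₁, hmax₂⟩ := g.support.exists_max_image ℓ ⟨0, hg0⟩
  obtain ⟨u, hu, v, hv, huv⟩ := UniqueSums.uniqueAdd_of_nonempty
    (A := f.support.filter fun x => ℓ x = ℓ s₁) (B := g.support.filter fun x => ℓ x = ℓ t₁)
    ⟨s₁, Finset.mem_filter.2 ⟨hs₁, rfl⟩⟩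
    ⟨t₁, Finset.mem_filter.2 ⟨ht₁, rfl⟩⟩
  rw [Finset.mem_filter] at hu hv
  have key : coeff (u + v) (f * g) = coeff u f * coeff v g := by
    rw [coeff_mul]
    refine Finset.sum_eq_single (u, v) ?_ ?_
    · rintro ⟨x, y⟩ hxy hne
      rw [Finset.HasAntidiagonal.mem_antidiagonal] at hxy
      by_contra hc
      have hx : x ∈ f.support := mem_support_iff.2 (left_ne_zero_of_mul hc)
      have hy : y ∈ g.support := mem_support_iff.2 (right_ne_zero_of_mul hc)
      have h1 := hmax₁ x hx
      have h2 := hmax₂ y hy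
      have h3 : ℓ x + ℓ y = ℓ s₁ + ℓ t₁ := by
        rw [← map_add, hxy, map_add, hu.2, hv.2]
      have hx' : ℓ x = ℓ s₁ := by omega
      have hy' : ℓ y = ℓ t₁ := by omega
      have hxA : x ∈ f.support.filter fun x => ℓ x = ℓ s₁ := Finset.mem_filter.2 ⟨hx, hx'⟩
      have hyB : y ∈ g.support.filter fun x => ℓ x = ℓ t₁ := Finset.mem_filter.2 ⟨hy, hy'⟩
      obtain ⟨h4, h5⟩ := huv hxA hyB hxy
      exact hne (Prod.ext h4 h5)
    · intro h
      exact absurd (by rw [Finset.HasAntidiagonal.mem_antidiagonal]) h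
  have hmem : u + v ∈ (f * g).support := by
    rw [mem_support_iff, key]
    exact mul_ne_zero (mem_support_iff.1 hu.1) (mem_support_iff.1 hv.1)
  have h1 := hfg _ hmem
  rw [map_add, hu.2, hv.2] at h1
  have h2 := hmax₂ 0 hg0
  rw [map_zero] at h2
  have h3 := hmax₁ s hs
  linarith

/-- The functional `s ↦ a_q s_p - a_p s_q`, which vanishes at `a`. -/
noncomputable def minorFunctional (a : σ →₀ ℕ) (p q : σ) : (σ →₀ ℕ) →+ ℤ where
  toFun s := (a q : ℤ) * s p - a p * s q
  map_zero' := by simp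
  map_add' s t := by simp; ring

lemma aeval_monomial_eq_sum (a : σ →₀ ℕ) (P : Polynomial ℤ) :
    Polynomial.aeval (monomial a (1 : ℤ)) P =
      ∑ i ∈ P.support, monomial (i • a) (P.coeff i) := by
  rw [Polynomial.aeval_def, Polynomial.eval₂_eq_sum, Polynomial.sum_def]
  refine Finset.sum_congr rfl fun i _ => ?_
  rw [monomial_pow, one_pow, algebraMap_eq, C_mul_monomial, mul_one]

lemma coeff_aeval_monomial {a : σ →₀ ℕ} (ha : a ≠ 0) (P : Polynomial ℤ) (c : ℕ) :
    coeff (c • a) (Polynomial.aeval (monomial a (1 : ℤ)) P) = P.coeff c := by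
  classical
  have hinj : ∀ i j : ℕ, i • a = j • a ↔ i = j := by
    intro i j
    refine ⟨fun h => ?_, fun h => h ▸ rfl⟩
    obtain ⟨p, hp⟩ := Finsupp.ne_iff.1 ha
    exact Nat.eq_of_mul_eq_mul_right (Nat.pos_of_ne_zero hp) (DFunLike.congr_fun h p)
  simp only [aeval_monomial_eq_sum, coeff_sum, coeff_monomial, hinj]
  simp +contextual

lemma aeval_monomial_injective {a : σ →₀ ℕ} (ha : a ≠ 0) :
    Function.Injective (Polynomial.aeval (R := ℤ) (monomial a (1 : ℤ))) := by
  intro P R h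
  ext c
  rw [← coeff_aeval_monomial ha, h, coeff_aeval_monomial ha]

/-- A vector proportional to a vector with coprime entries is a natural multiple of it. -/
lemma exists_eq_nsmul [Fintype σ] {a s : σ →₀ ℕ} (ha : Finset.univ.gcd a = 1)
    (h : ∀ p q, a q * s p = a p * s q) : ∃ c : ℕ, s = c • a := by
  refine ⟨Finset.univ.gcd s, ?_⟩
  ext p
  have h1 : (Finset.univ.gcd fun q => a q * s p) = Finset.univ.gcd fun q => a p * s q :=
    Finset.gcd_congr rfl fun q _ => h p q
  rw [Finset.gcd_mul_right, Finset.gcd_mul_left, ha] at h1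
  simpa [mul_comm] using h1

/-- A factor of a polynomial in `X^a` with nonzero constant term is a polynomial in `X^a`,
when the entries of `a` are coprime. -/
lemma exists_aeval_eq_of_mul [Fintype σ] {a : σ →₀ ℕ} (ha : Finset.univ.gcd a = 1)
    {f g : MvPolynomial σ ℤ} {P : Polynomial ℤ}
    (hfg : f * g = Polynomial.aeval (monomial a (1 : ℤ)) P) (hg : coeff 0 g ≠ 0) :
    ∃ F : Polynomial ℤ, f = Polynomial.aeval (monomial a (1 : ℤ)) F := by
  classical
  have hle : ∀ s ∈ f.support, ∀ p q, minorFunctional a p q s ≤ 0 := by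
    intro s hs p q
    refine weight_nonpos_of_mul _ (fun d hd => ?_) hg s hs
    rw [hfg, aeval_monomial_eq_sum] at hd
    obtain ⟨i, -, hi⟩ := Finset.mem_biUnion.1 (support_sum hd)
    have hd' : d = i • a := by simpa using support_monomial_subset hi
    rw [hd', map_nsmul]
    simp [minorFunctional, mul_comm]
  have hmul : ∀ s ∈ f.support, ∃ c : ℕ, s = c • a := by
    intro s hs
    refine exists_eq_nsmul ha fun p q => ?_
    have h1 := hle s hs p q
    have h2 := hle s hs q p
    simp only [minorFunctional, AddMonoidHom.coe_mk, ZeroHom.coe_mk] at h1 h2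
    zify
    linarith
  choose! c hc using hmul
  refine ⟨∑ s ∈ f.support, Polynomial.monomial (c s) (coeff s f), ?_⟩
  rw [map_sum]
  conv_lhs => rw [f.as_sum]
  refine Finset.sum_congr rfl fun s hs => ?_
  rw [Polynomial.aeval_monomial, monomial_pow, one_pow, ← hc s hs, algebraMap_eq, C_mul_monomial,
    mul_one]

/-- Irreducibility of `P` passes to `P(X^a)` when `P(0) ≠ 0` and the entries of `a` are coprime. -/
lemma irreducible_aeval_monomial [Fintype σ] {a : σ →₀ ℕ} (ha : Finset.univ.gcd a = 1)
    {P : Polynomial ℤ} (hP : Irreducible P) (hP0 : P.coeff 0 ≠ 0) :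
    Irreducible (Polynomial.aeval (monomial a (1 : ℤ)) P) := by
  have ha0 : a ≠ 0 := by
    rintro rfl
    have : Finset.univ.gcd (⇑(0 : σ →₀ ℕ)) = 0 := Finset.gcd_eq_zero_iff.2 (by simp)
    omega
  have lift : ∀ (f g : MvPolynomial σ ℤ) (R : Polynomial ℤ), R.coeff 0 ≠ 0 →
      f * g = Polynomial.aeval (monomial a (1 : ℤ)) R →
      ∃ F G : Polynomial ℤ, f = Polynomial.aeval (monomial a (1 : ℤ)) F ∧
        g = Polynomial.aeval (monomial a (1 : ℤ)) G ∧ F * G = R := by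
    intro f g R hR h
    have h0 : coeff 0 f * coeff 0 g ≠ 0 := by
      have := coeff_aeval_monomial ha0 R 0
      rw [← h, zero_smul] at this
      rw [← constantCoeff_eq, map_mul] at this
      exact this ▸ hR
    obtain ⟨F, hF⟩ := exists_aeval_eq_of_mul ha h (right_ne_zero_of_mul h0)
    obtain ⟨G, hG⟩ := exists_aeval_eq_of_mul ha ((mul_comm g f).trans h) (left_ne_zero_of_mul h0)
    refine ⟨F, G, hF, hG, aeval_monomial_injective ha0 ?_⟩
    rw [map_mul, ← hF, ← hG, h]
  refine ⟨fun hu => ?_, fun f g h => ?_⟩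
  · obtain ⟨g, hg⟩ := hu.exists_right_inv
    obtain ⟨F, G, hF, -, hFG⟩ := lift _ g 1 (by simp) (by rw [hg, map_one])
    rw [← aeval_monomial_injective ha0 hF] at hFG
    exact hP.not_isUnit (IsUnit.of_mul_eq_one G hFG)
  · obtain ⟨F, G, rfl, rfl, hFG⟩ := lift f g P hP0 h.symm
    exact (hP.isUnit_or_isUnit hFG.symm).imp (fun h => h.map _) (fun h => h.map _)

end MonomialSubstitution

/-- The exponent vector of `Q_m`. -/
noncomputable def Qexp {n : ℕ} (m : Fin n → ℕ) : Fin n × Fin n →₀ ℕ :=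
  Finsupp.equivFunOnFinite.symm fun p =>
    (if p.1 = p.2 then m p.1 * (m p.1 - 1) else m p.1 * m p.2) / Nnum m

lemma Qmono_eq_monomial {n : ℕ} (m : Fin n → ℕ) :
    Qmono m = MvPolynomial.monomial (Qexp m) 1 := by
  rw [MvPolynomial.monomial_eq, Finsupp.prod_fintype _ _ (by simp), Qmono]
  simp only [map_one, one_mul, Finset.univ_product_univ]
  refine Finset.prod_congr rfl fun p _ => ?_
  congr 1
  simp only [Qexp, Finsupp.equivFunOnFinite_symm_apply_apply]
  split_ifs <;> rfl

lemma gcd_Qexp {n : ℕ} (m : Fin n → ℕ) (hm : 2 ≤ ∑ i, m i) : Finset.univ.gcd (Qexp m) = 1 := by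
  -- either some entry of `m` is at least `2`, or two distinct entries are positive
  obtain ⟨p, hp⟩ : ∃ p : Fin n × Fin n,
      (if p.1 = p.2 then m p.1 * (m p.1 - 1) else m p.1 * m p.2) ≠ 0 := by
    by_contra! h
    obtain ⟨i, -, hi⟩ := Finset.exists_ne_zero_of_sum_ne_zero (s := Finset.univ) (f := m) (by omega)
    have h1 := h (i, i)
    have h2 : ∑ j, m j = m i := by
      refine Finset.sum_eq_single i (fun j _ hj => ?_) (by simp)
      have h3 := h (i, j)
      simp only [hj.symm, if_false] at h3
      exact (mul_eq_zero.1 h3).resolve_left hi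
    simp only [if_true] at h1
    have h4 := (mul_eq_zero.1 h1).resolve_left hi
    omega
  exact Finset.gcd_div_eq_one (f := fun p : Fin n × Fin n =>
    if p.1 = p.2 then m p.1 * (m p.1 - 1) else m p.1 * m p.2) (Finset.mem_univ p) hp

/-- For any `k ∈ ℕ` and any `m ∈ ℕ_0^n` with `|m| ≥ 2`, the polynomial
`Φ_k(Q_m) ∈ ℤ[p_{ij}]` is irreducible, where `Φ_k` is the `k`-th cyclotomic polynomial. -/
theorem stmt5 {n : ℕ} (k : ℕ) (hk : 1 ≤ k) (m : Fin n → ℕ) (hm : 2 ≤ ∑ i, m i) :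
    Irreducible (Polynomial.aeval (Qmono m) (Polynomial.cyclotomic k ℤ)) := by
  rw [Qmono_eq_monomial]
  refine irreducible_aeval_monomial (gcd_Qexp m hm) (Polynomial.cyclotomic.irreducible hk) ?_
  rcases hk.eq_or_lt with rfl | hk
  · simp
  · simp [Polynomial.cyclotomic_coeff_zero ℤ hk]
end

section
/- Let m ∈ N_0^n with m_s, m_t ≠ 0 for some s < t. Then Σ_{k | gcd(m)} ℓ_{m/k} ≤ Σ_{i : m_i > 0} ℓ_{m − e_i}, where ℓ_v denotes the number of Lyndon words of degree v. -/
/-!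
Write `N = ∑ m i`, `M(v)` for the number of all words of degree `v`, and `L`, `R` for the two
sides of the inequality.

A word is uniquely a power of an aperiodic word, and an aperiodic word of length `r` has exactly
`r` rotations, one of which is Lyndon. Hence `M(v) = ∑ (|v| / d) ℓ_{v/d}` over `d ∣ gcd(v)`
(`wordCount_eq_sum_lyndonCount`). Two consequences are used: Burnside's bound
`N * L ≤ ∑ φ(d) M(m/d)` over `d ∣ gcd(m)` (`sum_mul_sum_lyndonCount_le`) and the sieve bound
`M(v) ≤ |v| ℓ_v + ∑_{d ≥ 2} M(v/d)` (`wordCount_le_lyndonCount_add`), applied to `v = m - e_i`.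
Since `M(m) = ∑ M(m - e_i)`, the claim follows from
`(N - 1) ∑_{d ≥ 2} φ(d) M(m/d) + N ∑_i ∑_{d ≥ 2} M((m - e_i)/d) ≤ M(m)`.

If some `m c = 1` this can fail, but then aperiodicity is automatic for every degree except
`m - e_c`, and the claim follows directly from `M(m) = N * M(m - e_c)` (`main_of_eq_one`).

Otherwise let `c` be a letter with `b = m c ≥ 2` minimal among the nonzero entries, and
`a = N - b ≥ b`. Inserting the occurrences of `c` gives `M(m) = C(N, b) Q` with `Q` the number of
words in the other letters, and each of the terms above is at most the corresponding binomial
coefficient times `Q`. No `d ≥ 2` divides both `m i` and `m i - 1`, so the terms with `i ≠ c`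
belong to distinct `d`, all of them dividing `b` and `a - 1`. What remains is the numerical
inequality `tSum a b ≤ C(a + b, b)` (`tSum_le`). It follows from
`C(a + b, b) = ∏ (a + j) / j`: the indices divisible by `d` give `C((a + b)/d, b/d)`, and the other
factors, decreasing in `j`, make up the gain. The inequality is an equality for `b = 2`, so the
cases `b ≤ 6` are done with explicit constants for each `d`, and `b ≥ 7` uniformly.
-/

/-- The degree of a word: the number of occurrences of each letter. -/
def degreeW {n : ℕ} (w : List (Fin n)) : Fin n → ℕ := fun i => w.count i

/-- A nonempty word `w` is Lyndon if `w <_lex v` for every factorization `w = uv`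
into nonempty words. -/
def IsLyndon {n : ℕ} (w : List (Fin n)) : Prop :=
  w ≠ [] ∧ ∀ u v : List (Fin n), w = u ++ v → u ≠ [] → v ≠ [] →
    List.Lex (· < ·) w v

/-- A nonempty word `w` is a necklace if `w ≤_lex vu` for every factorization `w = uv`
into nonempty words. -/
def IsNecklace {n : ℕ} (w : List (Fin n)) : Prop :=
  w ≠ [] ∧ ∀ u v : List (Fin n), w = u ++ v → u ≠ [] → v ≠ [] →
    ¬ List.Lex (· < ·) (v ++ u) w

/-- `ℓ_m`, the number of Lyndon words of degree `m`. -/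
noncomputable def lyndonCount {n : ℕ} (m : Fin n → ℕ) : ℕ :=
  Nat.card {w : List (Fin n) // degreeW w = m ∧ IsLyndon w}

/-- `N_m`, the number of necklaces of degree `m`. -/
noncomputable def necklaceCount {n : ℕ} (m : Fin n → ℕ) : ℕ :=
  Nat.card {w : List (Fin n) // degreeW w = m ∧ IsNecklace w}

/-! ### Lyndon words and rotations -/

/-- If `a < b` is decided at a position where the two words differ, then arbitrary extensions
are compared in the same way. -/
theorem lex_append_of_not_isPrefix {α : Type*} {r : α → α → Prop} {a b : List α}
    (h : List.Lex r a b) (hp : ¬ a <+: b) (s t : List α) : List.Lex r (a ++ s) (b ++ t) := by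
  induction h with
  | nil => exact absurd ⟨_, rfl⟩ hp
  | cons h ih =>
    refine List.Lex.cons (ih ?_)
    intro h'
    exact hp (by simpa using h')
  | rel h => exact List.Lex.rel h

/-- The suffix definition of Lyndon words agrees with the rotation definition. -/
theorem isLyndon_iff_lt_rotate {n : ℕ} {w : List (Fin n)} (hw : w ≠ []) :
    IsLyndon w ↔ ∀ k, 0 < k → k < w.length → w < w.rotate k := by
  constructor
  · rintro ⟨-, h⟩ k hk hkw
    have h1 := h (w.take k) (w.drop k) (by simp) (by
      intro h0; have := congrArg List.length h0; simp at this; rcases this with h2 | h2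
      · omega
      · exact hw h2) (by
      intro h0; have := congrArg List.length h0; simp at this; omega)
    rw [List.rotate_eq_drop_append_take hkw.le]
    have h2 := lex_append_of_not_isPrefix h1 (fun hp => by
      have := hp.length_le; simp at this; omega) [] (w.take k)
    simpa using h2
  · intro h
    refine ⟨hw, ?_⟩
    intro x y hxy hx hy
    have hxl : 0 < x.length := List.length_pos_of_ne_nil hx
    have hyl : 0 < y.length := List.length_pos_of_ne_nil hy
    have h1 : w < y ++ x := by
      have := h x.length hxl (by rw [hxy, List.length_append]; omega)
      rwa [hxy, List.rotate_append_length_eq, ← hxy] at this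
    by_contra hcon
    have hyw : y < w := by
      rcases lt_trichotomy w y with h2 | h2 | h2
      · exact absurd h2 hcon
      · have := congrArg List.length h2
        rw [hxy, List.length_append] at this; omega
      · exact h2
    by_cases hp : y <+: w
    · obtain ⟨z, hz⟩ := hp
      have hlen : z.length = x.length := by
        have := congrArg List.length (hz.trans hxy); simp only [List.length_append] at this; omega
      have hzx : z < x := by
        rcases lt_trichotomy z x with h2 | h2 | h2
        · exact h2
        · rw [h2] at hz; rw [hz] at h1; exact absurd h1 (lt_irrefl _)
        · have h3 : y ++ x < y ++ z := List.Lex.append_left _ h2 y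
          rw [hz] at h3; exact absurd h3 (lt_asymm h1)
      have h4 : w < z ++ y := by
        have := h y.length hyl (by rw [hxy, List.length_append]; omega)
        rwa [← hz, List.rotate_append_length_eq, hz] at this
      have h5 : z ++ y < x ++ y := lex_append_of_not_isPrefix hzx
        (fun hp => hzx.ne (hp.eq_of_length hlen)) y y
      rw [← hxy] at h5
      exact absurd h5 (lt_asymm h4)
    · have h2 : y ++ x < w ++ [] := lex_append_of_not_isPrefix hyw hp x []
      rw [List.append_nil] at h2
      exact absurd h2 (lt_asymm h1)

theorem iterate_rotate_one {α : Type*} (w : List α) (k : ℕ) :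
    (fun x : List α => x.rotate 1)^[k] w = w.rotate k := by
  induction k with
  | zero => simp
  | succ k ih => rw [Function.iterate_succ_apply', ih, List.rotate_rotate]

/-- The least `p > 0` such that rotation by `p` fixes the word (`1` for the empty word). -/
noncomputable def rotPeriod {α : Type*} (w : List α) : ℕ :=
  Function.minimalPeriod (fun x : List α => x.rotate 1) w

theorem mem_periodicPts_rotate {α : Type*} (w : List α) :
    w ∈ Function.periodicPts (fun x : List α => x.rotate 1) := by
  rcases eq_or_ne w [] with rfl | hw
  · exact ⟨1, one_pos, by simp [Function.IsPeriodicPt, Function.IsFixedPt]⟩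
  · exact ⟨w.length, List.length_pos_of_ne_nil hw, by
      rw [Function.IsPeriodicPt, Function.IsFixedPt, iterate_rotate_one, List.rotate_length]⟩

theorem rotPeriod_dvd_iff {α : Type*} {w : List α} {k : ℕ} :
    rotPeriod w ∣ k ↔ w.rotate k = w := by
  rw [rotPeriod, ← Function.isPeriodicPt_iff_minimalPeriod_dvd, Function.IsPeriodicPt,
    Function.IsFixedPt, iterate_rotate_one]

theorem rotPeriod_rotate {α : Type*} (w : List α) (k : ℕ) :
    rotPeriod (w.rotate k) = rotPeriod w := by
  rw [← iterate_rotate_one]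
  exact Function.minimalPeriod_apply_iterate (mem_periodicPts_rotate w) k

theorem rotPeriod_pos {α : Type*} (w : List α) : 0 < rotPeriod w :=
  Function.minimalPeriod_pos_of_mem_periodicPts (mem_periodicPts_rotate w)

theorem rotPeriod_dvd_length {α : Type*} (w : List α) : rotPeriod w ∣ w.length :=
  rotPeriod_dvd_iff.2 (List.rotate_length w)

theorem IsLyndon.rotPeriod_eq {n : ℕ} {w : List (Fin n)} (h : IsLyndon w) :
    rotPeriod w = w.length := by
  have h1 := (isLyndon_iff_lt_rotate h.1).1 h
  have hl := List.length_pos_of_ne_nil h.1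
  refine le_antisymm (Nat.le_of_dvd hl (rotPeriod_dvd_length w)) ?_
  by_contra hlt
  have h2 := h1 _ (rotPeriod_pos w) (by omega)
  rw [rotPeriod_dvd_iff.1 dvd_rfl] at h2
  exact lt_irrefl _ h2

theorem IsLyndon.eq_of_isRotated {n : ℕ} {u v : List (Fin n)} (hu : IsLyndon u)
    (hv : IsLyndon v) (h : u ~r v) : u = v := by
  have key : ∀ {u v : List (Fin n)}, IsLyndon u → u ~r v → u ≤ v := by
    intro u v hu h
    obtain ⟨k, hk⟩ := h
    rw [← List.rotate_mod] at hk
    have hl := List.length_pos_of_ne_nil hu.1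
    rcases Nat.eq_zero_or_pos (k % u.length) with h0 | h0
    · rw [h0, List.rotate_zero] at hk; exact hk.le
    · exact hk ▸ ((isLyndon_iff_lt_rotate hu.1).1 hu _ h0 (Nat.mod_lt _ hl)).le
  exact le_antisymm (key hu h) (key hv h.symm)

/-- The least rotation of an aperiodic word is Lyndon. -/
theorem exists_isLyndon_rotate {n : ℕ} {w : List (Fin n)} (hw : w ≠ [])
    (hp : rotPeriod w = w.length) : ∃ k, IsLyndon (w.rotate k) := by
  have hl := List.length_pos_of_ne_nil hw
  obtain ⟨k, -, hk⟩ := Finset.exists_min_image (Finset.range w.length) w.rotate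
    ⟨0, Finset.mem_range.2 hl⟩
  refine ⟨k, (isLyndon_iff_lt_rotate (by simpa using hw)).2 ?_⟩
  intro j hj hjl
  rw [List.length_rotate] at hjl
  refine lt_of_le_of_ne ?_ ?_
  · rw [List.rotate_rotate, ← List.rotate_mod w (k + j)]
    exact hk _ (Finset.mem_range.2 (Nat.mod_lt _ hl))
  · intro h
    have := Nat.le_of_dvd hj (rotPeriod_dvd_iff.2 h.symm)
    rw [rotPeriod_rotate] at this
    omega

theorem degreeW_perm {n : ℕ} {u v : List (Fin n)} (h : u.Perm v) : degreeW u = degreeW v := by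
  funext i; exact h.count_eq i

theorem sum_degreeW {n : ℕ} (w : List (Fin n)) : ∑ i, degreeW w i = w.length := by
  have := Multiset.sum_count_eq_card (s := Finset.univ) (m := (w : Multiset (Fin n))) (by simp)
  simpa [degreeW] using this

theorem length_of_degreeW {n : ℕ} {w : List (Fin n)} {v : Fin n → ℕ} (h : degreeW w = v) :
    w.length = ∑ i, v i := by rw [← h, sum_degreeW]

instance finite_words {n : ℕ} (v : Fin n → ℕ) (P : List (Fin n) → Prop) :
    Finite {w : List (Fin n) // degreeW w = v ∧ P w} := by
  refine Set.Finite.subset (List.finite_length_eq (Fin n) (∑ i, v i)) ?_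
  rintro w ⟨h, -⟩
  exact length_of_degreeW h

/-- The number of words of degree `v` with no nontrivial rotational symmetry. -/
noncomputable def primCount {n : ℕ} (v : Fin n → ℕ) : ℕ :=
  Nat.card {w : List (Fin n) // degreeW w = v ∧ rotPeriod w = w.length}

/-- The aperiodic words are the rotations of Lyndon words: an aperiodic word of length `N` has
`N` distinct rotations, exactly one of them Lyndon. -/
theorem primCount_eq {n : ℕ} {v : Fin n → ℕ} (hv : 0 < ∑ i, v i) :
    primCount v = (∑ i, v i) * lyndonCount v := by
  rw [primCount, lyndonCount, ← Nat.card_fin (∑ i, v i), ← Nat.card_prod]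
  symm
  refine Nat.card_congr (Equiv.ofBijective (fun p => ⟨p.2.1.rotate p.1, ?_, ?_⟩) ⟨?_, ?_⟩)
  · rw [degreeW_perm (List.rotate_perm _ _)]; exact p.2.2.1
  · rw [rotPeriod_rotate, List.length_rotate]; exact p.2.2.2.rotPeriod_eq
  · rintro ⟨i, u, hu, hLu⟩ ⟨j, u', hu', hLu'⟩ h
    simp only [Subtype.mk.injEq] at h
    have hr : u ~r u' := (List.IsRotated.forall u i).symm.trans (h ▸ List.IsRotated.forall u' j)
    obtain rfl := hLu.eq_of_isRotated hLu' hr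
    have hlen := length_of_degreeW hu
    rw [← iterate_rotate_one, ← iterate_rotate_one,
      Function.iterate_eq_iterate_iff_of_lt_minimalPeriod] at h
    · simp [Fin.ext h]
    · exact i.2.trans_le (by rw [← hlen, ← hLu.rotPeriod_eq]; rfl)
    · exact j.2.trans_le (by rw [← hlen, ← hLu.rotPeriod_eq]; rfl)
  · rintro ⟨w, hw, hp⟩
    have hlen := length_of_degreeW hw
    have hne : w ≠ [] := by rintro rfl; simp at hlen; simp [hlen] at hv
    obtain ⟨k, hk⟩ := exists_isLyndon_rotate hne hp
    obtain ⟨j, hj⟩ := List.IsRotated.forall w k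
    refine ⟨⟨⟨j % w.length, by rw [← hlen]; exact Nat.mod_lt _ (by omega)⟩,
      w.rotate k, by rw [degreeW_perm (List.rotate_perm _ _), hw], hk⟩, ?_⟩
    simp only [Subtype.mk.injEq]
    have hmod := List.rotate_mod (w.rotate k) j
    rwa [hj, List.length_rotate] at hmod

/-! ### Powers of words and the number of words of a given degree -/

/-- The `d`-fold concatenation power of a word. -/
def wpow {α : Type*} (d : ℕ) (x : List α) : List α := (List.replicate d x).flatten

theorem wpow_zero {α : Type*} (x : List α) : wpow 0 x = [] := by simp [wpow]

theorem wpow_succ {α : Type*} (d : ℕ) (x : List α) : wpow (d + 1) x = x ++ wpow d x := by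
  simp [wpow, List.replicate_succ]

theorem length_wpow {α : Type*} (d : ℕ) (x : List α) : (wpow d x).length = d * x.length := by
  simp [wpow]

theorem degreeW_wpow {n : ℕ} (d : ℕ) (x : List (Fin n)) (i : Fin n) :
    degreeW (wpow d x) i = d * degreeW x i := by
  induction d with
  | zero => simp [wpow_zero, degreeW]
  | succ d ih =>
    simp only [degreeW] at ih ⊢
    rw [wpow_succ, List.count_append, ih]; ring

theorem wpow_rotate_one {α : Type*} (d : ℕ) (x : List α) :
    (wpow d x).rotate 1 = wpow d (x.rotate 1) := by
  cases x with
  | nil => simp [wpow]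
  | cons a t =>
    have key : ∀ d, wpow d (a :: t) ++ [a] = a :: wpow d (t ++ [a]) := by
      intro d
      induction d with
      | zero => simp [wpow_zero]
      | succ d ih => rw [wpow_succ, List.append_assoc, ih, wpow_succ]; simp
    cases d with
    | zero => simp [wpow_zero]
    | succ d =>
      have h := key (d + 1)
      rw [wpow_succ] at h ⊢
      simp only [List.cons_append, List.cons.injEq, true_and, List.rotate_cons_succ,
        List.rotate_zero] at h ⊢
      exact h

theorem wpow_rotate {α : Type*} (d k : ℕ) (x : List α) :
    (wpow d x).rotate k = wpow d (x.rotate k) := by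
  induction k with
  | zero => simp
  | succ k ih => rw [← List.rotate_rotate, ih, wpow_rotate_one, List.rotate_rotate]

theorem wpow_injective {α : Type*} {d : ℕ} (hd : 0 < d) {x y : List α}
    (h : wpow d x = wpow d y) : x = y := by
  have hl : x.length = y.length := by
    have := congrArg List.length h
    rw [length_wpow, length_wpow] at this
    exact Nat.eq_of_mul_eq_mul_left hd this
  obtain ⟨d, rfl⟩ := Nat.exists_eq_succ_of_ne_zero hd.ne'
  rw [Nat.succ_eq_add_one, wpow_succ, wpow_succ] at h
  exact (List.append_inj h hl).1

/-- The rotational period of `xx⋯x` is that of `x`, since rotating the power rotates `x`. -/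
theorem rotPeriod_wpow {α : Type*} {d : ℕ} (hd : 0 < d) (x : List α) :
    rotPeriod (wpow d x) = rotPeriod x := by
  have key : ∀ k, rotPeriod (wpow d x) ∣ k ↔ rotPeriod x ∣ k := by
    intro k
    rw [rotPeriod_dvd_iff, rotPeriod_dvd_iff, wpow_rotate]
    exact ⟨fun h => wpow_injective hd h, fun h => by rw [h]⟩
  exact Nat.dvd_antisymm ((key _).2 dvd_rfl) ((key _).1 dvd_rfl)

theorem eq_wpow_of_append_comm {α : Type*} (k : ℕ) (x y : List α) (h : x ++ y = y ++ x)
    (hl : y.length = k * x.length) : y = wpow k x := by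
  induction k generalizing y with
  | zero => simpa [wpow_zero] using hl
  | succ k ih =>
    have hp : x <+: y := List.prefix_of_prefix_length_le ⟨y, h⟩ ⟨x, rfl⟩ (by rw [hl]; nlinarith)
    obtain ⟨z, rfl⟩ := hp
    rw [wpow_succ, ← ih z]
    · simpa using h
    · rw [List.length_append] at hl; linarith

/-- A word fixed by a rotation by `p` is a power of its initial segment of length `p`. -/
theorem eq_wpow_take {α : Type*} {p d : ℕ} {w : List α} (hp : w.rotate p = w) (hd : 0 < d)
    (hl : w.length = d * p) : w = wpow d (w.take p) := by
  obtain ⟨k, rfl⟩ := Nat.exists_eq_succ_of_ne_zero hd.ne'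
  have hle : p ≤ w.length := by rw [hl]; exact Nat.le_mul_of_pos_left _ hd
  rw [List.rotate_eq_drop_append_take hle] at hp
  rw [Nat.succ_eq_add_one, wpow_succ, ← eq_wpow_of_append_comm k (w.take p) (w.drop p),
    List.take_append_drop]
  · rw [hp, List.take_append_drop]
  · rw [List.length_drop, List.length_take, min_eq_left hle, hl, Nat.succ_mul]; omega

/-- The number of all words of degree `v`. The conjunct `True` puts the subtype in the form
covered by the instance `finite_words`. -/
noncomputable def wordCount {n : ℕ} (v : Fin n → ℕ) : ℕ :=
  Nat.card {w : List (Fin n) // degreeW w = v ∧ True}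

/-- Each word is uniquely a power of an aperiodic word. -/
theorem wordCount_eq_sum_primCount {n : ℕ} {v : Fin n → ℕ} (hv : 0 < ∑ i, v i) :
    wordCount v = ∑ d ∈ (Finset.univ.gcd v).divisors, primCount (fun j => v j / d) := by
  rw [← Finset.sum_coe_sort]
  unfold primCount wordCount
  rw [← Nat.card_sigma]
  have hg : Finset.univ.gcd v ≠ 0 := by
    intro h
    rw [Finset.gcd_eq_zero_iff] at h
    rw [Finset.sum_eq_zero h] at hv
    exact lt_irrefl _ hv
  symm
  refine Nat.card_congr (Equiv.ofBijective (fun p => ⟨wpow p.1 p.2.1, ?_, trivial⟩) ⟨?_, ?_⟩)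
  · funext i
    rw [degreeW_wpow, p.2.2.1]
    exact Nat.mul_div_cancel' ((Nat.dvd_of_mem_divisors p.1.2).trans
      (Finset.gcd_dvd (Finset.mem_univ i)))
  · rintro ⟨⟨d, hd⟩, x, hx, hpx⟩ ⟨⟨d', hd'⟩, x', hx', hpx'⟩ h
    simp only [Subtype.mk.injEq] at h
    have hd0 := Nat.pos_of_mem_divisors hd
    have hd0' := Nat.pos_of_mem_divisors hd'
    have h1 : x.length = x'.length := by
      rw [← hpx, ← hpx', ← rotPeriod_wpow hd0, h, rotPeriod_wpow hd0']
    have h2 := congrArg List.length h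
    rw [length_wpow, length_wpow, h1] at h2
    obtain rfl : d = d' := Nat.eq_of_mul_eq_mul_right
      (by rw [← hpx']; exact rotPeriod_pos _) h2
    obtain rfl := wpow_injective hd0 h
    rfl
  · rintro ⟨w, hw, -⟩
    have hl := length_of_degreeW hw
    obtain ⟨d, hd⟩ := rotPeriod_dvd_length w
    have hd0 : 0 < d := Nat.pos_of_ne_zero (by rintro rfl; omega)
    have hle : rotPeriod w ≤ w.length := by rw [hd]; exact Nat.le_mul_of_pos_right _ hd0
    have hwx := eq_wpow_take (rotPeriod_dvd_iff.1 dvd_rfl) hd0 (hd.trans (mul_comm _ _))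
    have hdeg : ∀ i, v i = d * degreeW (w.take (rotPeriod w)) i := by
      intro i; rw [← degreeW_wpow, ← hwx, hw]
    refine ⟨⟨⟨d, ?_⟩, w.take (rotPeriod w), ?_, ?_⟩, ?_⟩
    · rw [Nat.mem_divisors]
      exact ⟨Finset.dvd_gcd fun i _ => ⟨_, hdeg i⟩, hg⟩
    · funext i
      simp only [hdeg i]
      rw [Nat.mul_div_cancel_left _ hd0]
    · rw [← rotPeriod_wpow hd0, ← hwx, List.length_take, min_eq_left hle]
    · simp only [Subtype.mk.injEq]
      exact hwx.symm

theorem wordCount_eq_sum_lyndonCount {n : ℕ} {v : Fin n → ℕ} (hv : 0 < ∑ i, v i) :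
    wordCount v = ∑ d ∈ (Finset.univ.gcd v).divisors,
      ((∑ i, v i) / d) * lyndonCount (fun j => v j / d) := by
  rw [wordCount_eq_sum_primCount hv]
  refine Finset.sum_congr rfl fun d hd => ?_
  have hdv : ∀ i, d ∣ v i := fun i =>
    (Nat.dvd_of_mem_divisors hd).trans (Finset.gcd_dvd (Finset.mem_univ i))
  have hsum : ∑ i, v i / d = (∑ i, v i) / d := (Nat.sum_div fun i _ => hdv i).symm
  rw [primCount_eq, hsum]
  rw [hsum]
  exact Nat.div_pos (Nat.le_of_dvd hv (Finset.dvd_sum fun i _ => hdv i))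
    (Nat.pos_of_mem_divisors hd)

/-- The degree `v - e_i`. -/
def dec {n : ℕ} (v : Fin n → ℕ) (i : Fin n) : Fin n → ℕ := fun j => v j - if j = i then 1 else 0

/-- Sort the words of degree `v` by their first letter. -/
theorem wordCount_pascal {n : ℕ} {v : Fin n → ℕ} (hv : 0 < ∑ i, v i) :
    wordCount v = ∑ i ∈ Finset.univ.filter (fun i => 0 < v i), wordCount (dec v i) := by
  rw [← Finset.sum_coe_sort]
  unfold wordCount
  rw [← Nat.card_sigma]
  symm
  refine Nat.card_congr (Equiv.ofBijective (fun p => ⟨p.1.1 :: p.2.1, ?_, trivial⟩) ⟨?_, ?_⟩)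
  · obtain ⟨⟨i, hi⟩, w, hw, -⟩ := p
    have hi' : 0 < v i := by simpa using hi
    funext j
    have := congrFun hw j
    simp only [degreeW, dec, List.count_cons] at this ⊢
    rcases eq_or_ne j i with rfl | hj
    · simp at this ⊢; omega
    · simp [hj, hj.symm] at this ⊢; omega
  · rintro ⟨⟨i, hi⟩, w, hw, _⟩ ⟨⟨i', hi'⟩, w', hw', _⟩ h
    simp only [Subtype.mk.injEq, List.cons.injEq] at h
    obtain ⟨rfl, rfl⟩ := h
    rfl
  · rintro ⟨w, hw, -⟩
    have hl := length_of_degreeW hw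
    cases w with
    | nil => simp at hl; omega
    | cons a t =>
      refine ⟨⟨⟨a, ?_⟩, t, ?_, trivial⟩, rfl⟩
      · simp [← hw, degreeW]
      · funext j
        have := congrFun hw j
        simp only [degreeW, dec, List.count_cons] at this ⊢
        rcases eq_or_ne j a with rfl | hj
        · simp at this ⊢; omega
        · simp [hj, hj.symm] at this ⊢; omega

theorem sum_dec {n : ℕ} {v : Fin n → ℕ} {i : Fin n} (hi : 0 < v i) :
    ∑ j, dec v i j = (∑ j, v j) - 1 := by
  have : ∑ j, dec v i j + ∑ j, (if j = i then 1 else 0) = ∑ j, v j := by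
    rw [← Finset.sum_add_distrib]
    refine Finset.sum_congr rfl fun j _ => ?_
    unfold dec
    split_ifs with h
    · subst h; omega
    · omega
  simp at this
  omega

theorem wordCount_mul_prod_factorial {n : ℕ} (v : Fin n → ℕ) :
    wordCount v * ∏ i, (v i).factorial = (∑ i, v i).factorial := by
  induction hN : ∑ i, v i generalizing v with
  | zero =>
    have hv : ∀ i, v i = 0 := by simpa using hN
    have h1 : wordCount v = 1 := by
      rw [wordCount, Nat.card_eq_one_iff_unique]
      refine ⟨⟨?_⟩, ⟨⟨[], by funext i; simp [degreeW, hv], trivial⟩⟩⟩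
      rintro ⟨w, hw, -⟩ ⟨w', hw', -⟩
      have h1 := length_of_degreeW hw
      have h2 := length_of_degreeW hw'
      rw [hN, List.length_eq_zero_iff] at h1 h2
      simp [h1, h2]
    simp [h1, hv]
  | succ N ih =>
    rw [wordCount_pascal (by omega), Finset.sum_mul]
    have key : ∀ i ∈ Finset.univ.filter (fun i => 0 < v i),
        wordCount (dec v i) * ∏ j, (v j).factorial = v i * N.factorial := by
      intro i hi
      have hi' : 0 < v i := by simpa using hi
      have hprod : ∏ j, (v j).factorial = v i * ∏ j, (dec v i j).factorial := by
        rw [← Finset.mul_prod_erase _ _ (Finset.mem_univ i),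
          ← Finset.mul_prod_erase _ (fun j => (dec v i j).factorial) (Finset.mem_univ i),
          ← mul_assoc]
        congr 1
        · simp only [dec, if_true]; exact (Nat.mul_factorial_pred hi'.ne').symm
        · refine Finset.prod_congr rfl fun j hj => ?_
          simp [dec, Finset.ne_of_mem_erase hj]
      rw [hprod, ← ih (dec v i) (by rw [sum_dec hi', hN]; rfl)]
      ring
    rw [Finset.sum_congr rfl key, ← Finset.sum_mul, Nat.factorial_succ, ← hN]
    congr 1
    exact Finset.sum_filter_of_ne fun i _ h => Nat.pos_of_ne_zero h

/-- Choosing the positions of the letter `c` first. -/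
theorem wordCount_eq_choose_mul {n : ℕ} (v : Fin n → ℕ) (c : Fin n) :
    wordCount v = (∑ i, v i).choose (v c) * wordCount (Function.update v c 0) := by
  have hs : v c + ∑ i, Function.update v c 0 i = ∑ i, v i := by
    rw [← Finset.add_sum_erase _ _ (Finset.mem_univ c),
      ← Finset.add_sum_erase _ v (Finset.mem_univ c)]
    simp only [Function.update_self, zero_add]
    congr 1
    exact Finset.sum_congr rfl fun j hj => by simp [Finset.ne_of_mem_erase hj]
  have hp : ∏ i, (v i).factorial =
      (v c).factorial * ∏ i, (Function.update v c 0 i).factorial := by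
    rw [← Finset.mul_prod_erase _ _ (Finset.mem_univ c),
      ← Finset.mul_prod_erase _ (fun i => (Function.update v c 0 i).factorial)
        (Finset.mem_univ c)]
    simp only [Function.update_self, Nat.factorial_zero, one_mul]
    congr 1
    exact Finset.prod_congr rfl fun j hj => by simp [Finset.ne_of_mem_erase hj]
  have h1 := wordCount_mul_prod_factorial v
  have h2 := wordCount_mul_prod_factorial (Function.update v c 0)
  have h3 := Nat.add_choose_mul_factorial_mul_factorial (v c) (∑ i, Function.update v c 0 i)
  rw [← Nat.choose_symm_add, hs, ← h2, ← h1, hp] at h3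
  have hpos : 0 < (v c).factorial * ∏ i, (Function.update v c 0 i).factorial :=
    Nat.mul_pos (Nat.factorial_pos _) (Finset.prod_pos fun _ _ => Nat.factorial_pos _)
  refine Nat.eq_of_mul_eq_mul_right hpos ?_
  rw [← h3]
  ring

theorem wordCount_mono {n : ℕ} {u v : Fin n → ℕ} (h : ∀ i, u i ≤ v i) :
    wordCount u ≤ wordCount v := by
  induction hN : ∑ i, v i generalizing v with
  | zero =>
    have hv : ∀ i, v i = 0 := by simpa using hN
    have : u = v := funext fun i => by have := h i; have := hv i; omega
    rw [this]
  | succ N ih =>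
    by_cases huv : u = v
    · rw [huv]
    obtain ⟨i, hi⟩ : ∃ i, u i ≠ v i := by
      by_contra hcon; push Not at hcon; exact huv (funext hcon)
    have hlt := lt_of_le_of_ne (h i) hi
    have hvi : 0 < v i := by omega
    refine (ih (v := dec v i) ?_ (by rw [sum_dec hvi, hN]; rfl)).trans ?_
    · intro j
      unfold dec
      split_ifs with hj
      · subst hj; omega
      · exact h j
    · rw [wordCount_pascal (v := v) (by omega)]
      exact Finset.single_le_sum (f := fun i => wordCount (dec v i)) (fun _ _ => Nat.zero_le _)
        (by simpa using hvi)

/-! ### Binomial coefficients and their divided versions -/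

theorem choose_eq_prod (a b : ℕ) :
    ((a + b).choose b : ℚ) = ∏ j ∈ Finset.Icc 1 b, ((a + j : ℚ) / j) := by
  induction b with
  | zero => simp
  | succ b ih =>
    rw [Finset.prod_Icc_succ_top (by omega), ← ih]
    have h := Nat.add_one_mul_choose_eq (a + b) b
    have h' : ((a : ℚ) + b + 1) * (a + b).choose b = (a + (b + 1)).choose (b + 1) * (b + 1) := by
      rw [← add_assoc]; exact_mod_cast h
    push_cast
    field_simp
    linarith

/-- In `C(a + b, b) = ∏ (a + j) / j` the factors whose index `j` is a multiple of `d` multiply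
to `C((a + b) / d, b / d)`, and all other factors are at least `1`; those with index in `S` are
kept. -/
theorem choose_div_mul_prod_le {a b d : ℕ} (hd : 0 < d) (hda : d ∣ a) (hdb : d ∣ b)
    {S : Finset ℕ} (hS : ∀ j ∈ S, 1 ≤ j ∧ j ≤ b ∧ ¬ d ∣ j) :
    (((a + b) / d).choose (b / d) : ℚ) * ∏ j ∈ S, ((a + j : ℚ) / j) ≤ (a + b).choose b := by
  obtain ⟨a', rfl⟩ := hda
  obtain ⟨b', rfl⟩ := hdb
  have hd' : (d : ℚ) ≠ 0 := by positivity
  rw [← mul_add, Nat.mul_div_cancel_left _ hd, Nat.mul_div_cancel_left _ hd, choose_eq_prod,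
    mul_add, choose_eq_prod]
  have himg : ∏ j ∈ Finset.Icc 1 b', ((a' + j : ℚ) / j) =
      ∏ j ∈ (Finset.Icc 1 b').image (d * ·), (((d * a' : ℕ) + j : ℚ) / j) := by
    rw [Finset.prod_image fun x _ y _ h => Nat.eq_of_mul_eq_mul_left hd h]
    refine Finset.prod_congr rfl fun j _ => ?_
    push_cast
    rw [← mul_add, mul_div_mul_left _ _ hd']
  have hdisj : Disjoint ((Finset.Icc 1 b').image (d * ·)) S := by
    rw [Finset.disjoint_left]
    intro j hj hjS
    obtain ⟨k, -, rfl⟩ := Finset.mem_image.1 hj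
    exact (hS _ hjS).2.2 (Dvd.intro k rfl)
  rw [himg, ← Finset.prod_union hdisj]
  refine Finset.prod_le_prod_of_subset_of_one_le ?_ ?_ ?_
  · intro j hj
    rw [Finset.mem_union] at hj
    rw [Finset.mem_Icc]
    rcases hj with hj | hj
    · obtain ⟨k, hk, rfl⟩ := Finset.mem_image.1 hj
      rw [Finset.mem_Icc] at hk
      exact ⟨Nat.mul_pos hd hk.1, Nat.mul_le_mul_left d hk.2⟩
    · exact ⟨(hS j hj).1, (hS j hj).2.1⟩
  · intro j _; positivity
  · intro j hj _
    rw [Finset.mem_Icc] at hj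
    have : (0 : ℚ) < j := by exact_mod_cast hj.1
    rw [le_div_iff₀ this]
    have : (0 : ℚ) ≤ (d * a' : ℕ) := by positivity
    linarith

/-- The product over `S` increases with `a`, so lower bounds for it may be checked at the
smallest relevant value `a₀`. -/
theorem prod_ratio_mono {a₀ a : ℕ} (h : a₀ ≤ a) (S : Finset ℕ) :
    ∏ j ∈ S, ((a₀ + j : ℚ) / j) ≤ ∏ j ∈ S, ((a + j : ℚ) / j) := by
  have : (a₀ : ℚ) ≤ a := by exact_mod_cast h
  refine Finset.prod_le_prod (fun j _ => by positivity) fun j _ => ?_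
  gcongr

/-- The index `b - 1` is not divisible by `d`; its factor `(a + b - 1) / (b - 1)` absorbs the
coefficient `a + b - 1`. -/
theorem term1_le {a b d a₀ : ℕ} (ha : a₀ ≤ a) (hb : 2 ≤ b) (hd : 2 ≤ d) (hda : d ∣ a)
    (hdb : d ∣ b) (S : Finset ℕ) (hS : ∀ j ∈ S, 1 ≤ j ∧ j ≤ b - 2 ∧ ¬ d ∣ j) :
    ((a + b - 1 : ℚ)) * ((a + b) / d).choose (b / d) * ∏ j ∈ S, ((a₀ + j : ℚ) / j)
      ≤ (b - 1) * (a + b).choose b := by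
  have hmem : b - 1 ∉ S := fun h => by have := hS _ h; omega
  have h1 := choose_div_mul_prod_le (a := a) (b := b) (d := d) (S := insert (b - 1) S) (by omega)
    hda hdb (by
      intro j hj
      rw [Finset.mem_insert] at hj
      rcases hj with rfl | hj
      · refine ⟨by omega, by omega, fun h => ?_⟩
        have h2 := (Nat.dvd_sub_iff_right (by omega) hdb).1 h
        have := Nat.le_of_dvd one_pos h2
        omega
      · have := hS j hj
        exact ⟨this.1, by omega, this.2.2⟩)
  rw [Finset.prod_insert hmem] at h1
  have h2 := prod_ratio_mono ha S
  have hb1 : (0 : ℚ) < b - 1 := by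
    have : (2 : ℚ) ≤ b := by exact_mod_cast hb
    linarith
  have ha0 : (0 : ℚ) ≤ a := by positivity
  rw [Nat.cast_sub (by omega : 1 ≤ b), Nat.cast_one] at h1
  have h3 := mul_le_mul_of_nonneg_left h1 hb1.le
  refine le_trans ?_ h3
  have h4 : ((b : ℚ) - 1) * (((a + b) / d).choose (b / d) * ((a + (b - 1)) / (b - 1) *
      ∏ j ∈ S, ((a + j : ℚ) / j))) = (a + b - 1 : ℚ) * ((a + b) / d).choose (b / d) *
      ∏ j ∈ S, ((a + j : ℚ) / j) := by
    field_simp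
    ring
  rw [h4]
  have : (0 : ℚ) ≤ a + b - 1 := by linarith
  gcongr

/-- Here the products run over `(a - 1 + j) / j`; the factor of index `1` is `a`, and
`(a + b) C(a + b - 1, b) = a C(a + b, b)`. -/
theorem term2_le {a b d a₀ : ℕ} (ha : a₀ + 1 ≤ a) (hd : 2 ≤ d) (hda : d ∣ a - 1)
    (hb : 2 ≤ b) (hdb : d ∣ b) (S : Finset ℕ) (hS : ∀ j ∈ S, 2 ≤ j ∧ j ≤ b ∧ ¬ d ∣ j) :
    ((a + b : ℚ)) * ((a + b - 1) / d).choose (b / d) * ∏ j ∈ S, ((a₀ + j : ℚ) / j)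
      ≤ (a + b).choose b := by
  obtain ⟨c, rfl⟩ : ∃ c, a = c + 1 := ⟨a - 1, by omega⟩
  simp only [Nat.add_sub_cancel] at hda
  have hmem : 1 ∉ S := fun h => by have := hS _ h; omega
  have h1 := choose_div_mul_prod_le (a := c) (b := b) (d := d) (S := insert 1 S) (by omega)
    hda hdb (by
      intro j hj
      rw [Finset.mem_insert] at hj
      rcases hj with rfl | hj
      · refine ⟨by omega, by omega, fun h => ?_⟩
        have := Nat.le_of_dvd one_pos h
        omega
      · have := hS j hj
        exact ⟨by omega, this.2⟩)
  rw [Finset.prod_insert hmem] at h1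
  have h2 := prod_ratio_mono (show a₀ ≤ c by omega) S
  have h3 : ((c : ℚ) + b + 1) * (c + b).choose b = (c + 1 + b).choose b * (c + 1) := by
    have h := Nat.add_one_mul_choose_eq (c + b) c
    rw [← Nat.choose_symm_add, show c + 1 + b = c + b + 1 by ring,
      ← Nat.choose_symm (show b ≤ c + b + 1 by omega), show c + b + 1 - b = c + 1 by omega]
    exact_mod_cast h
  rw [show c + 1 + b - 1 = c + b by omega]
  have hc : (0 : ℚ) < c + 1 := by positivity
  have h5 : ((c : ℚ) + b + 1) * (((c + b) / d).choose (b / d) * ∏ j ∈ S, ((a₀ + j : ℚ) / j))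
      * (c + 1) ≤ (c + 1 + b).choose b * (c + 1) := by
    rw [← h3, mul_assoc]
    gcongr
    refine le_trans ?_ h1
    rw [Nat.cast_one, div_one]
    calc _ ≤ (((c + b) / d).choose (b / d) * ∏ j ∈ S, ((c + j : ℚ) / j)) * (c + 1) := by gcongr
      _ = _ := by ring
  have h6 := le_of_mul_le_mul_right h5 hc
  refine le_trans (le_of_eq ?_) h6
  push_cast
  ring

/-- The coefficient is absorbed by `(a + b) C(a + b - 1, b - 1) = b C(a + b, b)`. -/
theorem term3_le {a b d a₀ : ℕ} (ha : a₀ ≤ a) (hb : 2 ≤ b) (hd : 2 ≤ d) (hda : d ∣ a)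
    (hdb : d ∣ b - 1) (S : Finset ℕ) (hS : ∀ j ∈ S, 1 ≤ j ∧ j ≤ b - 1 ∧ ¬ d ∣ j) :
    ((a + b : ℚ)) * ((a + b - 1) / d).choose ((b - 1) / d) * ∏ j ∈ S, ((a₀ + j : ℚ) / j)
      ≤ b * (a + b).choose b := by
  obtain ⟨c, rfl⟩ : ∃ c, b = c + 1 := ⟨b - 1, by omega⟩
  simp only [Nat.add_sub_cancel] at hdb hS ⊢
  have h1 := choose_div_mul_prod_le (a := a) (b := c) (d := d) (S := S) (by omega) hda hdb hS
  have h2 := prod_ratio_mono ha S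
  have h3 : ((a : ℚ) + (c + 1)) * (a + c).choose c = (c + 1) * (a + (c + 1)).choose (c + 1) := by
    have h := Nat.add_one_mul_choose_eq (a + c) c
    rw [← add_assoc, ← add_assoc, mul_comm ((c : ℚ) + 1)]
    exact_mod_cast h
  rw [show a + (c + 1) - 1 = a + c by omega]
  push_cast
  rw [← h3, mul_assoc]
  gcongr
  refine le_trans ?_ h1
  gcongr

/-! ### The two-letter inequality -/

/-- A summand of `tSum`, estimated by `c * C(a + b, b)`. The parameters are chosen by the caller:
a lower bound `a₀` for `a` and a set `S` of indices not divisible by `d`, whose factors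
`(a₀ + j) / j` make the constant `c` small. -/
theorem ite1_le {a b d : ℕ} (a₀ : ℕ) (S : Finset ℕ) (c : ℚ) (ha : a₀ ≤ a) (hb : 2 ≤ b)
    (hd : 2 ≤ d) (hdb : d ∣ b) (hS : ∀ j ∈ S, 1 ≤ j ∧ j ≤ b - 2 ∧ ¬ d ∣ j)
    (hc : (d.totient : ℚ) * (b - 1) ≤ c * ∏ j ∈ S, ((a₀ + j : ℚ) / j)) (hc0 : 0 ≤ c) :
    (if d ∣ a then (a + b - 1 : ℚ) * d.totient * ((a + b) / d).choose (b / d) else 0)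
      ≤ c * (a + b).choose b := by
  split_ifs with hda
  · have h := term1_le ha hb hd hda hdb S hS
    have hP : 0 < ∏ j ∈ S, ((a₀ + j : ℚ) / j) := Finset.prod_pos fun j hj => by
      have := (hS j hj).1
      positivity
    refine le_of_mul_le_mul_right ?_ hP
    calc _ = d.totient * ((a + b - 1 : ℚ) * ((a + b) / d).choose (b / d) *
            ∏ j ∈ S, ((a₀ + j : ℚ) / j)) := by ring
      _ ≤ d.totient * ((b - 1) * (a + b).choose b) := by gcongr
      _ = (d.totient * (b - 1)) * (a + b).choose b := by ring
      _ ≤ (c * ∏ j ∈ S, ((a₀ + j : ℚ) / j)) * (a + b).choose b := by gcongr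
      _ = _ := by ring
  · positivity

theorem ite2_le {a b d : ℕ} (a₀ : ℕ) (S : Finset ℕ) (c : ℚ) (ha : a₀ + 1 ≤ a) (hb : 2 ≤ b)
    (hd : 2 ≤ d) (hdb : d ∣ b) (hS : ∀ j ∈ S, 2 ≤ j ∧ j ≤ b ∧ ¬ d ∣ j)
    (hc : 1 ≤ c * ∏ j ∈ S, ((a₀ + j : ℚ) / j)) (hc0 : 0 ≤ c) :
    (if d ∣ a - 1 then (a + b : ℚ) * ((a + b - 1) / d).choose (b / d) else 0)
      ≤ c * (a + b).choose b := by
  split_ifs with hda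
  · have h := term2_le ha hd hda hb hdb S hS
    have hP : 0 < ∏ j ∈ S, ((a₀ + j : ℚ) / j) := Finset.prod_pos fun j hj => by
      have := (hS j hj).1
      positivity
    refine le_of_mul_le_mul_right (h.trans ?_) hP
    calc ((a + b).choose b : ℚ) = 1 * (a + b).choose b := by ring
      _ ≤ (c * ∏ j ∈ S, ((a₀ + j : ℚ) / j)) * (a + b).choose b := by gcongr
      _ = _ := by ring
  · positivity

theorem ite3_le {a b d : ℕ} (a₀ : ℕ) (S : Finset ℕ) (c : ℚ) (ha : a₀ ≤ a) (hb : 2 ≤ b)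
    (hd : 2 ≤ d) (hdb : d ∣ b - 1) (hS : ∀ j ∈ S, 1 ≤ j ∧ j ≤ b - 1 ∧ ¬ d ∣ j)
    (hc : (b : ℚ) ≤ c * ∏ j ∈ S, ((a₀ + j : ℚ) / j)) (hc0 : 0 ≤ c) :
    (if d ∣ a then (a + b : ℚ) * ((a + b - 1) / d).choose ((b - 1) / d) else 0)
      ≤ c * (a + b).choose b := by
  split_ifs with hda
  · have h := term3_le ha hb hd hda hdb S hS
    have hP : 0 < ∏ j ∈ S, ((a₀ + j : ℚ) / j) := Finset.prod_pos fun j hj => by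
      have := (hS j hj).1
      positivity
    refine le_of_mul_le_mul_right (h.trans ?_) hP
    calc (b : ℚ) * (a + b).choose b
        ≤ (c * ∏ j ∈ S, ((a₀ + j : ℚ) / j)) * (a + b).choose b := by gcongr
      _ = _ := by ring
  · positivity

/-- The contribution of powers `x ^ d` with `d ≥ 2` in the two-letter case, for the degree
`(a, b)`. The three sums belong to the degrees `(a, b)`, `(a - 1, b)` and `(a, b - 1)`; a power
`x ^ d` occurs only if `d` divides both entries, and is then determined by a word `x` of the
divided degree. The first sum is weighted by `φ(d)`, as in Burnside's formula. -/
def tSum (a b : ℕ) : ℚ :=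
  ∑ d ∈ b.divisors.erase 1,
      (if d ∣ a then (a + b - 1 : ℚ) * d.totient * ((a + b) / d).choose (b / d) else 0) +
    ∑ d ∈ b.divisors.erase 1,
      (if d ∣ a - 1 then (a + b : ℚ) * ((a + b - 1) / d).choose (b / d) else 0) +
    ∑ d ∈ (b - 1).divisors.erase 1,
      (if d ∣ a then (a + b : ℚ) * ((a + b - 1) / d).choose ((b - 1) / d) else 0)

theorem tSum_two {a : ℕ} (ha : 2 ≤ a) : tSum a 2 ≤ (a + 2).choose 2 := by
  have h1 : Nat.divisors 2 = {1, 2} := rfl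
  simp only [tSum, h1, Nat.reduceSub, Nat.divisors_one]
  rw [show ({1, 2} : Finset ℕ).erase 1 = {2} from rfl, Finset.erase_singleton]
  simp only [Finset.sum_singleton, Finset.sum_empty, add_zero]
  rcases Nat.even_or_odd' a with ⟨k, rfl | rfl⟩
  · have h2 := ite1_le (a := 2 * k) (b := 2) (d := 2) (2 * k) ∅ 1 le_rfl le_rfl le_rfl dvd_rfl
      (by simp) (by norm_num) zero_le_one
    rw [if_neg (show ¬ 2 ∣ 2 * k - 1 by omega), add_zero]
    exact h2.trans (by rw [one_mul])
  · have h2 := ite2_le (a := 2 * k + 1) (b := 2) (d := 2) (2 * k) ∅ 1 le_rfl le_rfl le_rfl dvd_rfl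
      (by simp) (by norm_num) zero_le_one
    rw [if_neg (show ¬ 2 ∣ 2 * k + 1 by omega), zero_add]
    exact h2.trans (by rw [one_mul])

theorem tSum_three {a : ℕ} (ha : 3 ≤ a) : tSum a 3 ≤ (a + 3).choose 3 := by
  have h1 : (Nat.divisors 3).erase 1 = {3} := rfl
  have h2 : (Nat.divisors 2).erase 1 = {2} := rfl
  have h3 : Nat.totient 3 = 2 := rfl
  simp only [tSum, h1, h2, Nat.reduceSub, Finset.sum_singleton]
  rcases lt_or_ge a 6 with ha6 | ha6
  · interval_cases a <;> norm_num [Nat.choose, h3]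
  · have e1 := ite1_le (a := a) (b := 3) (d := 3) 6 {1} (4/7) ha6 (by norm_num) (by norm_num)
      dvd_rfl (by simp) (by norm_num [h3]) (by norm_num)
    have e2 := ite2_le (a := a) (b := 3) (d := 3) 5 {2} (2/7) ha6 (by norm_num) (by norm_num)
      dvd_rfl (by simp) (by norm_num) (by norm_num)
    have e3 := ite3_le (a := a) (b := 3) (d := 2) 6 {1} (3/7) ha6 (by norm_num) (by norm_num)
      dvd_rfl (by simp) (by norm_num) (by norm_num)
    have hX : (0 : ℚ) ≤ (a + 3).choose 3 := by positivity
    by_cases h : 3 ∣ a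
    · rw [if_neg (show ¬ 3 ∣ a - 1 by omega), add_zero]
      simp only [Nat.reduceSub] at e3
      linarith
    · rw [if_neg h, zero_add]
      simp only [Nat.reduceSub] at e3
      linarith

theorem tSum_four {a : ℕ} (ha : 4 ≤ a) : tSum a 4 ≤ (a + 4).choose 4 := by
  have h1 : (Nat.divisors 4).erase 1 = {2, 4} := rfl
  have h2 : (Nat.divisors 3).erase 1 = {3} := rfl
  have h3 : Nat.totient 4 = 2 := rfl
  have h4 : Nat.totient 2 = 1 := rfl
  simp only [tSum, h1, h2, Nat.reduceSub, Finset.sum_singleton,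
    Finset.sum_pair (show 2 ≠ 4 by norm_num)]
  rcases lt_or_ge a 6 with ha6 | ha6
  · interval_cases a <;> norm_num [Nat.choose, h3]
  · have e1 := ite1_le (a := a) (b := 4) (d := 2) 6 {1} (3/7) ha6 (by norm_num) (by norm_num)
      (by norm_num) (by simp) (by norm_num [h4]) (by norm_num)
    have e1' := ite1_le (a := a) (b := 4) (d := 4) 6 {1, 2} (6/28) ha6 (by norm_num) (by norm_num)
      (by norm_num) (by simp) (by norm_num [h3]) (by norm_num)
    have e2 := ite2_le (a := a) (b := 4) (d := 2) 5 {3} (3/8) ha6 (by norm_num) (by norm_num)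
      (by norm_num) (by simp) (by norm_num) (by norm_num)
    have e2' := ite2_le (a := a) (b := 4) (d := 4) 5 {2, 3} (6/56) ha6 (by norm_num) (by norm_num)
      (by norm_num) (by simp) (by norm_num) (by norm_num)
    have e3 := ite3_le (a := a) (b := 4) (d := 3) 6 {1, 2} (4/28) ha6 (by norm_num) (by norm_num)
      (by norm_num) (by simp) (by norm_num) (by norm_num)
    have hX : (0 : ℚ) ≤ (a + 4).choose 4 := by positivity
    simp only [Nat.reduceSub] at e3
    by_cases h : 2 ∣ a
    · rw [if_neg (show ¬ 2 ∣ a - 1 by omega), if_neg (show ¬ 4 ∣ a - 1 by omega)]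
      linarith
    · rw [if_neg h, if_neg (show ¬ 4 ∣ a by omega)]
      linarith

theorem tSum_five {a : ℕ} (ha : 5 ≤ a) : tSum a 5 ≤ (a + 5).choose 5 := by
  have h1 : (Nat.divisors 5).erase 1 = {5} := rfl
  have h2 : (Nat.divisors 4).erase 1 = {2, 4} := rfl
  have h3 : Nat.totient 5 = 4 := rfl
  simp only [tSum, h1, h2, Nat.reduceSub, Finset.sum_singleton,
    Finset.sum_pair (show 2 ≠ 4 by norm_num)]
  have e1 := ite1_le (a := a) (b := 5) (d := 5) 5 {1, 2, 3} (3/10) ha (by norm_num) (by norm_num)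
    (by norm_num) (by simp) (by norm_num [h3]) (by norm_num)
  have e2 := ite2_le (a := a) (b := 5) (d := 5) 4 {2, 3} (1/5) ha (by norm_num) (by norm_num)
    (by norm_num) (by simp) (by norm_num) (by norm_num)
  have e3 := ite3_le (a := a) (b := 5) (d := 2) 5 {1, 3} (1/3) ha (by norm_num) (by norm_num)
    (by norm_num) (by simp) (by norm_num) (by norm_num)
  have e3' := ite3_le (a := a) (b := 5) (d := 4) 5 {1, 2, 3} (1/10) ha (by norm_num) (by norm_num)
    (by norm_num) (by simp) (by norm_num) (by norm_num)
  have hX : (0 : ℚ) ≤ (a + 5).choose 5 := by positivity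
  simp only [Nat.reduceSub] at e3 e3'
  linarith

theorem tSum_six {a : ℕ} (ha : 6 ≤ a) : tSum a 6 ≤ (a + 6).choose 6 := by
  have h1 : (Nat.divisors 6).erase 1 = {2, 3, 6} := rfl
  have h2 : (Nat.divisors 5).erase 1 = {5} := rfl
  have h3 : Nat.totient 3 = 2 := rfl
  have h4 : Nat.totient 2 = 1 := rfl
  have h5 : Nat.totient 6 = 2 := rfl
  have hsum : ∀ f : ℕ → ℚ, ∑ d ∈ ({2, 3, 6} : Finset ℕ), f d = f 2 + f 3 + f 6 := by
    intro f
    rw [Finset.sum_insert (by simp), Finset.sum_pair (by norm_num)]; ring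
  simp only [tSum, h1, h2, Nat.reduceSub, Finset.sum_singleton, hsum]
  have e1 := ite1_le (a := a) (b := 6) (d := 2) 6 {1, 3} (1/4) ha (by norm_num) (by norm_num)
    (by norm_num) (by simp) (by norm_num [h4]) (by norm_num)
  have e1' := ite1_le (a := a) (b := 6) (d := 3) 6 {1, 2, 4} (1/7) ha (by norm_num) (by norm_num)
    (by norm_num) (by simp) (by norm_num [h3]) (by norm_num)
  have e1'' := ite1_le (a := a) (b := 6) (d := 6) 6 {1, 2, 3, 4} (1/20) ha (by norm_num)
    (by norm_num) (by norm_num) (by simp) (by norm_num [h5]) (by norm_num)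
  have e2 := ite2_le (a := a) (b := 6) (d := 2) 5 {3, 5} (1/5) ha (by norm_num) (by norm_num)
    (by norm_num) (by simp) (by norm_num) (by norm_num)
  have e2' := ite2_le (a := a) (b := 6) (d := 3) 5 {2, 4, 5} (1/15) ha (by norm_num) (by norm_num)
    (by norm_num) (by simp) (by norm_num) (by norm_num)
  have e2'' := ite2_le (a := a) (b := 6) (d := 6) 5 {2, 3, 4} (1/20) ha (by norm_num)
    (by norm_num) (by norm_num) (by simp) (by norm_num) (by norm_num)
  have e3 := ite3_le (a := a) (b := 6) (d := 5) 6 {1, 2, 3, 4} (1/20) ha (by norm_num)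
    (by norm_num) (by norm_num) (by simp) (by norm_num) (by norm_num)
  have hX : (0 : ℚ) ≤ (a + 6).choose 6 := by positivity
  simp only [Nat.reduceSub] at e3
  linarith

set_option maxHeartbeats 1000000 in
/-- For `b ≥ 7` the estimate has room to spare: `d ≥ 3` gets a bound independent of `d`, which
is summed by `∑ φ(d) = b - 1` or by counting divisors trivially, and `d = 2` is treated apart.
The resulting constants `0.16`, `0.30`, `0.16` and `0.38` add up to `1`. -/
theorem tSum_large {a b : ℕ} (hb : 7 ≤ b) (hab : b ≤ a) : tSum a b ≤ (a + b).choose b := by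
  set X : ℚ := (((a + b).choose b : ℕ) : ℚ) with hX
  have hX0 : 0 ≤ X := by positivity
  obtain ⟨y, rfl⟩ : ∃ y, b = y + 7 := ⟨b - 7, by omega⟩
  set q : ℚ := (y : ℚ) + 7 with hq
  have hy : (0 : ℚ) ≤ y := by positivity
  have hbq : ((y + 7 : ℕ) : ℚ) = q := by push_cast; rfl
  have n1 : q + 1 ≠ 0 := by positivity
  have n2 : q + 2 ≠ 0 := by positivity
  have n3 : q + 3 ≠ 0 := by positivity
  have n4 : q + 4 ≠ 0 := by positivity
  have n5 : q - 1 ≠ 0 := by linarith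
  have n6 : q - 2 ≠ 0 := by linarith
  -- Some `t ∈ {3, 4}` is not divisible by `d`, for every `d ≥ 3`.
  have ht : ∀ d : ℕ, 3 ≤ d → ∃ t, (t = 3 ∨ t = 4) ∧ ¬ d ∣ t := by
    intro d hd
    by_cases h3 : d = 3
    · exact ⟨4, Or.inr rfl, by subst h3; norm_num⟩
    · exact ⟨3, Or.inl rfl, fun h => by have := Nat.le_of_dvd (by norm_num) h; omega⟩
  have hnd : ∀ d j k : ℕ, 0 < j → j < d → d ∣ k → j < k → ¬ d ∣ k - j := by
    intro d j k hj hjd hk hjk h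
    have := Nat.le_of_dvd hj ((Nat.dvd_sub_iff_right hjk.le hk).1 h)
    omega
  have htq : ∀ (t : ℕ) (x : ℚ), (t = 3 ∨ t = 4) → 0 ≤ x → (x + 4) / 4 ≤ (x + t) / t := by
    rintro t x (rfl | rfl) hx
    · push_cast; linarith
    · push_cast; linarith
  have hnd2 : ∀ d j : ℕ, 0 < j → j < d → ¬ d ∣ j := fun d j hj hjd h =>
    absurd (Nat.le_of_dvd hj h) (by omega)
  have b1 : ∀ d ∈ (y + 7).divisors.erase 1,
      (if d ∣ a then (a + (y + 7 : ℕ) - 1 : ℚ) * d.totient *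
        ((a + (y + 7)) / d).choose ((y + 7) / d) else 0)
      ≤ (if d = 2 then 3 * (q - 1) / ((q + 1) * (q + 3)) * X else 0) +
        d.totient * (4 * (q - 2) / ((q + 1) * (q + 2) * (q + 4)) * X) := by
    intro d hd
    rw [Finset.mem_erase, Nat.mem_divisors] at hd
    have hd0 := Nat.pos_of_dvd_of_pos hd.2.1 (by omega)
    have hq2 : 0 ≤ q - 2 := by linarith
    split_ifs with hda h2 h2
    · subst h2
      refine le_trans ?_ (le_add_of_nonneg_right (by positivity))
      have := ite1_le (a := a) (b := y + 7) (d := 2) (y + 7) {1, 3}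
        (3 * (q - 1) / ((q + 1) * (q + 3))) hab (by omega) le_rfl hd.2.1
        (by intro j hj; simp at hj; omega) ?_ ?_
      · rwa [if_pos hda] at this
      · rw [Finset.prod_pair (by norm_num), hbq]
        apply le_of_eq
        rw [Nat.totient_two]
        field_simp
        push_cast; ring
      · exact div_nonneg (by linarith) (by positivity)
    · have hd3 : 3 ≤ d := by omega
      obtain ⟨t, ht1, ht2⟩ := ht d hd3
      have := ite1_le (a := a) (b := y + 7) (d := d) (y + 7) {1, 2, t, y + 7 - 2}
        (d.totient * (4 * (q - 2) / ((q + 1) * (q + 2) * (q + 4)))) hab (by omega) (by omega)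
        hd.2.1 ?_ ?_ (by positivity)
      · rw [if_pos hda] at this
        rw [zero_add, ← mul_assoc]; exact this
      · intro j hj
        simp only [Finset.mem_insert, Finset.mem_singleton] at hj
        rcases hj with rfl | rfl | rfl | rfl
        · exact ⟨by omega, by omega, hnd2 _ _ (by omega) (by omega)⟩
        · exact ⟨by omega, by omega, hnd2 _ _ (by omega) (by omega)⟩
        · exact ⟨by omega, by omega, ht2⟩
        · exact ⟨by omega, by omega, hnd _ _ _ (by omega) (by omega) hd.2.1 (by omega)⟩
      · rw [Finset.prod_insert (by simp; omega), Finset.prod_insert (by simp; omega),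
          Finset.prod_insert (by simp; omega), Finset.prod_singleton, hbq,
          Nat.cast_sub (by omega), hbq]
        have h4 := htq t q ht1 (by linarith)
        have hq2' : 0 < q - 2 := by linarith
        calc (d.totient : ℚ) * (q - 1) = (d.totient * (4 * (q - 2) / ((q + 1) * (q + 2) * (q + 4))))
              * ((q + 1) / 1 * ((q + 2) / 2 * ((q + 4) / 4 * ((q + (q - 2)) / (q - 2))))) := by
              field_simp; ring
          _ ≤ _ := by push_cast; gcongr
    · refine add_nonneg (mul_nonneg (div_nonneg (by linarith) (by positivity)) hX0) (by positivity)
    · positivity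
  have b2 : ∀ d ∈ (y + 7).divisors.erase 1,
      (if d ∣ a - 1 then (a + (y + 7 : ℕ) : ℚ) *
        ((a + (y + 7) - 1) / d).choose ((y + 7) / d) else 0)
      ≤ (if d = 2 then 15 / ((q + 2) * (q + 4)) * X else 0) +
        4 / ((q + 1) * (q + 3)) * X := by
    intro d hd
    rw [Finset.mem_erase, Nat.mem_divisors] at hd
    have hd0 := Nat.pos_of_dvd_of_pos hd.2.1 (by omega)
    have hq6 : ((y + 6 : ℕ) : ℚ) = q - 1 := by rw [hq]; push_cast; ring
    split_ifs with hda h2 h2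
    · subst h2
      refine le_trans ?_ (le_add_of_nonneg_right (by positivity))
      have := ite2_le (a := a) (b := y + 7) (d := 2) (y + 6) {3, 5}
        (15 / ((q + 2) * (q + 4))) (by omega) (by omega) le_rfl hd.2.1
        (by intro j hj; simp at hj; omega) ?_ (by positivity)
      · rwa [if_pos hda] at this
      · rw [Finset.prod_pair (by norm_num), hq6]
        apply le_of_eq
        push_cast
        field_simp
        ring
    · have hd3 : 3 ≤ d := by omega
      obtain ⟨t, ht1, ht2⟩ := ht d hd3
      have := ite2_le (a := a) (b := y + 7) (d := d) (y + 6) {2, t, y + 7 - 1}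
        (4 / ((q + 1) * (q + 3))) (by omega) (by omega) (by omega)
        hd.2.1 ?_ ?_ (by positivity)
      · rw [if_pos hda] at this
        rw [zero_add]; exact this
      · intro j hj
        simp only [Finset.mem_insert, Finset.mem_singleton] at hj
        rcases hj with rfl | rfl | rfl
        · exact ⟨by omega, by omega, hnd2 _ _ (by omega) (by omega)⟩
        · exact ⟨by omega, by omega, ht2⟩
        · exact ⟨by omega, by omega, hnd _ _ _ (by omega) (by omega) hd.2.1 (by omega)⟩
      · rw [Finset.prod_insert (by simp; omega),
          Finset.prod_insert (by simp; omega), Finset.prod_singleton, hq6,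
          Nat.cast_sub (by omega), hbq]
        have h4 := htq t (q - 1) ht1 (by linarith)
        have hq2' : 0 < q - 1 := by linarith
        calc (1 : ℚ) = (4 / ((q + 1) * (q + 3)))
              * (((q - 1) + 2) / 2 * ((q - 1 + 4) / 4 * ((q - 1 + (q - 1)) / (q - 1)))) := by
              field_simp; ring
          _ ≤ _ := by push_cast; gcongr
    · positivity
    · positivity
  have b3 : ∀ d ∈ (y + 7 - 1).divisors.erase 1,
      (if d ∣ a then (a + (y + 7 : ℕ) : ℚ) *
        ((a + (y + 7) - 1) / d).choose ((y + 7 - 1) / d) else 0)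
      ≤ (if d = 2 then 3 * q / ((q + 1) * (q + 3)) * X else 0) +
        4 * q * (q - 2) / ((q + 1) * (q + 2) * (q + 4) * (q - 1)) * X := by
    intro d hd
    rw [Finset.mem_erase, Nat.mem_divisors] at hd
    have hd0 := Nat.pos_of_dvd_of_pos hd.2.1 (by omega)
    have hq1 : 0 < q - 1 := by linarith
    have hq2 : 0 < q - 2 := by linarith
    split_ifs with hda h2 h2
    · subst h2
      refine le_trans ?_ (le_add_of_nonneg_right (by positivity))
      have := ite3_le (a := a) (b := y + 7) (d := 2) (y + 7) {1, 3}
        (3 * q / ((q + 1) * (q + 3))) hab (by omega) le_rfl hd.2.1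
        (by intro j hj; simp at hj; omega) ?_ (by positivity)
      · rwa [if_pos hda] at this
      · rw [Finset.prod_pair (by norm_num), hbq]
        apply le_of_eq
        push_cast
        field_simp
    · have hd3 : 3 ≤ d := by omega
      obtain ⟨t, ht1, ht2⟩ := ht d hd3
      have := ite3_le (a := a) (b := y + 7) (d := d) (y + 7) {1, 2, t, y + 7 - 1 - 1}
        (4 * q * (q - 2) / ((q + 1) * (q + 2) * (q + 4) * (q - 1))) hab (by omega) (by omega)
        hd.2.1 ?_ ?_ (by positivity)
      · rw [if_pos hda] at this
        rw [zero_add]; exact this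
      · intro j hj
        simp only [Finset.mem_insert, Finset.mem_singleton] at hj
        rcases hj with rfl | rfl | rfl | rfl
        · exact ⟨by omega, by omega, hnd2 _ _ (by omega) (by omega)⟩
        · exact ⟨by omega, by omega, hnd2 _ _ (by omega) (by omega)⟩
        · exact ⟨by omega, by omega, ht2⟩
        · exact ⟨by omega, by omega, hnd _ _ _ (by omega) (by omega) hd.2.1 (by omega)⟩
      · rw [Finset.prod_insert (by simp; omega), Finset.prod_insert (by simp; omega),
          Finset.prod_insert (by simp; omega), Finset.prod_singleton, hbq,
          show ((y + 7 - 1 - 1 : ℕ) : ℚ) = q - 2 by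
            rw [show y + 7 - 1 - 1 = y + 5 by omega, hq]; push_cast; ring]
        have h4 := htq t q ht1 (by linarith)
        calc q = (4 * q * (q - 2) / ((q + 1) * (q + 2) * (q + 4) * (q - 1)))
              * ((q + 1) / 1 * ((q + 2) / 2 * ((q + 4) / 4 * ((q + (q - 2)) / (q - 2))))) := by
              field_simp; ring
          _ ≤ _ := by push_cast; gcongr
    · positivity
    · positivity
  have s1 := Finset.sum_le_sum b1
  have s2 := Finset.sum_le_sum b2
  have s3 := Finset.sum_le_sum b3
  rw [Finset.sum_add_distrib, Finset.sum_ite_eq'] at s1 s2 s3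
  rw [← Finset.sum_mul] at s1
  rw [Finset.sum_const, nsmul_eq_mul] at s2 s3
  have hphi : ∑ d ∈ (y + 7).divisors.erase 1, (d.totient : ℚ) = q - 1 := by
    have h := Nat.sum_totient (y + 7)
    rw [← Finset.add_sum_erase _ _ (Nat.one_mem_divisors.2 (by omega)), Nat.totient_one] at h
    have h' : (1 : ℚ) + ∑ d ∈ (y + 7).divisors.erase 1, (d.totient : ℚ) = q := by
      rw [← hbq]; exact_mod_cast h
    linarith
  have hcard2 : (((y + 7).divisors.erase 1).card : ℚ) ≤ q - 1 := by
    rw [Finset.card_erase_of_mem (Nat.one_mem_divisors.2 (by omega))]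
    have := Nat.card_divisors_le_self (y + 7)
    have h : ((y + 7).divisors.card - 1 : ℕ) ≤ y + 6 := by omega
    have : (((y + 7).divisors.card - 1 : ℕ) : ℚ) ≤ ((y + 6 : ℕ) : ℚ) := by exact_mod_cast h
    push_cast at this ⊢
    linarith
  have hcard3 : (((y + 7 - 1).divisors.erase 1).card : ℚ) ≤ q - 2 := by
    rw [Finset.card_erase_of_mem (Nat.one_mem_divisors.2 (by omega))]
    have := Nat.card_divisors_le_self (y + 7 - 1)
    have h : ((y + 7 - 1).divisors.card - 1 : ℕ) ≤ y + 5 := by omega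
    have : (((y + 7 - 1).divisors.card - 1 : ℕ) : ℚ) ≤ ((y + 5 : ℕ) : ℚ) := by exact_mod_cast h
    push_cast at this ⊢
    linarith
  rw [hphi] at s1
  have hq1 : 0 < q - 1 := by linarith
  have hq2 : 0 < q - 2 := by linarith
  have c1 : (q - 1) * (4 * (q - 2) / ((q + 1) * (q + 2) * (q + 4)) * X) ≤ 16 / 100 * X := by
    rw [← mul_assoc]
    refine mul_le_mul_of_nonneg_right ?_ hX0
    rw [← mul_div_assoc, div_le_iff₀ (by positivity), hq]
    nlinarith [mul_nonneg hy (sq_nonneg ((y : ℚ) - 2)), sq_nonneg ((y : ℚ) - 2)]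
  have c2 : (((y + 7).divisors.erase 1).card : ℚ) * (4 / ((q + 1) * (q + 3)) * X)
      ≤ 30 / 100 * X := by
    rw [← mul_assoc]
    refine mul_le_mul_of_nonneg_right ?_ hX0
    refine (mul_le_mul_of_nonneg_right hcard2 (by positivity)).trans ?_
    rw [← mul_div_assoc, div_le_iff₀ (by positivity), hq]
    nlinarith
  have c3 : (((y + 7 - 1).divisors.erase 1).card : ℚ) *
      (4 * q * (q - 2) / ((q + 1) * (q + 2) * (q + 4) * (q - 1)) * X) ≤ 16 / 100 * X := by
    rw [← mul_assoc]
    refine mul_le_mul_of_nonneg_right ?_ hX0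
    refine (mul_le_mul_of_nonneg_right hcard3 (by positivity)).trans ?_
    rw [← mul_div_assoc, div_le_iff₀ (by positivity), hq]
    nlinarith [mul_nonneg hy (sq_nonneg ((y : ℚ) - 2)), sq_nonneg ((y : ℚ) - 2),
      mul_nonneg (mul_nonneg hy hy) (sq_nonneg ((y : ℚ) - 2)), sq_nonneg ((y : ℚ) * (y - 2))]
  -- `d = 2` divides exactly one of `b` and `b - 1`.
  have c4 : (if 2 ∈ (y + 7).divisors.erase 1 then 3 * (q - 1) / ((q + 1) * (q + 3)) * X else 0) +
      (if 2 ∈ (y + 7).divisors.erase 1 then 15 / ((q + 2) * (q + 4)) * X else 0) +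
      (if 2 ∈ (y + 7 - 1).divisors.erase 1 then 3 * q / ((q + 1) * (q + 3)) * X else 0)
      ≤ 38 / 100 * X := by
    by_cases h2 : 2 ∣ y + 7
    · have hy1 : (1 : ℚ) ≤ y := by
        have : 1 ≤ y := by omega
        exact_mod_cast this
      rw [if_neg (show ¬ 2 ∈ (y + 7 - 1).divisors.erase 1 by simp; omega),
        if_pos (show 2 ∈ (y + 7).divisors.erase 1 by simp; omega),
        if_pos (show 2 ∈ (y + 7).divisors.erase 1 by simp; omega), add_zero, ← add_mul]
      refine mul_le_mul_of_nonneg_right ?_ hX0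
      have d1 : 3 * (q - 1) / ((q + 1) * (q + 3)) ≤ 22 / 100 := by
        rw [div_le_iff₀ (by positivity), hq]; nlinarith
      have d2 : 15 / ((q + 2) * (q + 4)) ≤ 13 / 100 := by
        rw [div_le_iff₀ (by positivity), hq]; nlinarith
      linarith
    · rw [if_neg (show ¬ 2 ∈ (y + 7).divisors.erase 1 by simp; omega),
        if_neg (show ¬ 2 ∈ (y + 7).divisors.erase 1 by simp; omega),
        if_pos (show 2 ∈ (y + 7 - 1).divisors.erase 1 by simp; omega), add_zero, zero_add]
      refine mul_le_mul_of_nonneg_right ?_ hX0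
      rw [div_le_iff₀ (by positivity), hq]; nlinarith
  rw [tSum]
  linarith

theorem tSum_le {a b : ℕ} (hb : 2 ≤ b) (hab : b ≤ a) : tSum a b ≤ (a + b).choose b := by
  rcases lt_or_ge b 7 with h | h
  · interval_cases b
    · exact tSum_two hab
    · exact tSum_three hab
    · exact tSum_four hab
    · exact tSum_five hab
    · exact tSum_six hab
  · exact tSum_large h hab

/-! ### Comparison of Lyndon word counts -/

theorem gcd_ne_zero_of_sum_pos {n : ℕ} {v : Fin n → ℕ} (hv : 0 < ∑ i, v i) :
    Finset.univ.gcd v ≠ 0 := by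
  intro h
  rw [Finset.gcd_eq_zero_iff] at h
  simp [h] at hv

theorem mem_divisors_gcd {n : ℕ} {v : Fin n → ℕ} (hv : 0 < ∑ i, v i) {d : ℕ} :
    d ∈ (Finset.univ.gcd v).divisors ↔ ∀ i, d ∣ v i := by
  rw [Nat.mem_divisors, Finset.dvd_gcd_iff]
  simp [gcd_ne_zero_of_sum_pos hv]

theorem sum_div_of_dvd {n : ℕ} {v : Fin n → ℕ} {d : ℕ} (h : ∀ i, d ∣ v i) :
    ∑ i, v i / d = (∑ i, v i) / d :=
  (Nat.sum_div fun i _ => h i).symm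

theorem sum_div_pos {n : ℕ} {v : Fin n → ℕ} {d : ℕ} (hv : 0 < ∑ i, v i) (h : ∀ i, d ∣ v i) :
    0 < ∑ i, v i / d := by
  rw [sum_div_of_dvd h]
  have hd : d ∣ ∑ i, v i := Finset.dvd_sum fun i _ => h i
  exact Nat.div_pos (Nat.le_of_dvd hv hd) (Nat.pos_of_dvd_of_pos hd hv)

/-- For `k = d * e`, the summand counts the words of degree `v / d` that are `e`-th powers of
aperiodic words. -/
theorem sum_filter_dvd_le_wordCount {n : ℕ} {v : Fin n → ℕ} {d : ℕ} (hv : 0 < ∑ i, v i)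
    (h : ∀ i, d ∣ v i) :
    ∑ k ∈ (Finset.univ.gcd v).divisors with d ∣ k,
      (∑ i, v i) / k * lyndonCount (fun j => v j / k) ≤ wordCount (fun j => v j / d) := by
  have hdpos : 0 < d := Nat.pos_of_dvd_of_pos (Finset.dvd_sum fun i _ => h i) hv
  have hv' := sum_div_pos hv h
  rw [wordCount_eq_sum_lyndonCount hv', sum_div_of_dvd h]
  simp only [Nat.div_div_eq_div_mul]
  rw [← Finset.sum_image (f := fun k => (∑ i, v i) / k * lyndonCount (fun j => v j / k))
    (s := (Finset.univ.gcd fun j => v j / d).divisors) (g := (d * ·))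
    fun x _ y _ hxy => Nat.eq_of_mul_eq_mul_left hdpos hxy]
  refine Finset.sum_le_sum_of_subset fun k hk => ?_
  rw [Finset.mem_filter, mem_divisors_gcd hv] at hk
  obtain ⟨hk, e, rfl⟩ := hk
  refine Finset.mem_image.2 ⟨e, (mem_divisors_gcd hv').2 fun i => ?_, rfl⟩
  exact (Nat.dvd_div_iff_mul_dvd (h i)).2 (hk i)

/-- Burnside's formula for the rotation classes of words of degree `v`, obtained by writing each
divisor `k` as the sum of `φ(d)` over `d ∣ k`. Only this inequality is needed. -/
theorem sum_mul_sum_lyndonCount_le {n : ℕ} {v : Fin n → ℕ} (hv : 0 < ∑ i, v i) :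
    (∑ i, v i) * ∑ k ∈ (Finset.univ.gcd v).divisors, lyndonCount (fun j => v j / k) ≤
      ∑ d ∈ (Finset.univ.gcd v).divisors, d.totient * wordCount (fun j => v j / d) := by
  set g := Finset.univ.gcd v with hg
  have hg0 : g ≠ 0 := gcd_ne_zero_of_sum_pos hv
  calc (∑ i, v i) * ∑ k ∈ g.divisors, lyndonCount (fun j => v j / k)
      = ∑ k ∈ g.divisors, ∑ d ∈ g.divisors, if d ∣ k then
          d.totient * ((∑ i, v i) / k * lyndonCount (fun j => v j / k)) else 0 := by
        rw [Finset.mul_sum]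
        refine Finset.sum_congr rfl fun k hk => ?_
        have hkg := Nat.dvd_of_mem_divisors hk
        have hkv : k ∣ ∑ i, v i := Finset.dvd_sum fun i _ => (mem_divisors_gcd hv).1 hk i
        rw [← Finset.sum_filter, ← Finset.sum_mul]
        have hfil : {d ∈ g.divisors | d ∣ k} = k.divisors := by
          ext d
          simp only [Finset.mem_filter, Nat.mem_divisors]
          exact ⟨fun h => ⟨h.2, fun hk0 => hg0 (by rw [hk0] at hkg; exact zero_dvd_iff.1 hkg)⟩,
            fun h => ⟨⟨h.1.trans hkg, hg0⟩, h.1⟩⟩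
        rw [hfil, Nat.sum_totient, ← mul_assoc, Nat.mul_div_cancel' hkv]
    _ = ∑ d ∈ g.divisors, d.totient * ∑ k ∈ g.divisors with d ∣ k,
          (∑ i, v i) / k * lyndonCount (fun j => v j / k) := by
        rw [Finset.sum_comm]
        refine Finset.sum_congr rfl fun d _ => ?_
        rw [← Finset.sum_filter, Finset.mul_sum]
    _ ≤ _ := by
        gcongr with d hd
        exact sum_filter_dvd_le_wordCount hv ((mem_divisors_gcd hv).1 hd)

/-- Every word is aperiodic or a `d`-th power of a word for some `d ≥ 2`. -/
theorem wordCount_le_lyndonCount_add {n : ℕ} {v : Fin n → ℕ} (hv : 0 < ∑ i, v i) :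
    wordCount v ≤ (∑ i, v i) * lyndonCount v +
      ∑ d ∈ (Finset.univ.gcd v).divisors.erase 1, wordCount (fun j => v j / d) := by
  have h1 : 1 ∈ (Finset.univ.gcd v).divisors :=
    Nat.one_mem_divisors.2 (gcd_ne_zero_of_sum_pos hv)
  rw [wordCount_eq_sum_lyndonCount hv, ← Finset.add_sum_erase _ _ h1]
  simp only [Nat.div_one]
  gcongr with d hd
  have hd := (mem_divisors_gcd hv).1 (Finset.mem_of_mem_erase hd)
  have hv' := sum_div_pos hv hd
  rw [wordCount_eq_sum_lyndonCount hv', ← Finset.add_sum_erase _ _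
    (Nat.one_mem_divisors.2 (gcd_ne_zero_of_sum_pos hv')), sum_div_of_dvd hd]
  simp only [Nat.div_one]
  exact Nat.le_add_right _ _

/-- If some letter `c` occurs exactly once, all words involved but those of degree `m - e_c`
are primitive. -/
theorem main_of_eq_one {n : ℕ} {m : Fin n → ℕ} {c : Fin n} (hc : m c = 1)
    (hN : 2 ≤ ∑ i, m i) :
    ∑ k ∈ (Finset.univ.gcd m).divisors, lyndonCount (fun j => m j / k)
      ≤ ∑ i ∈ Finset.univ.filter (fun i => 0 < m i), lyndonCount (dec m i) := by
  have hv : 0 < ∑ i, m i := by omega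
  have hg : ∀ v : Fin n → ℕ, v c = 1 → Finset.univ.gcd v = 1 := fun v hvc =>
    Nat.dvd_one.1 (hvc ▸ Finset.gcd_dvd (Finset.mem_univ c))
  have hcm : c ∈ Finset.univ.filter (fun i => 0 < m i) := by simp [hc]
  have h1 := sum_mul_sum_lyndonCount_le hv
  rw [hg m hc] at h1 ⊢
  simp only [Nat.divisors_one, Finset.sum_singleton, Nat.div_one, Nat.totient_one, one_mul]
    at h1 ⊢
  have h2 := wordCount_pascal hv
  rw [← Finset.add_sum_erase _ _ hcm] at h2
  have h3 : wordCount m = (∑ i, m i) * wordCount (dec m c) := by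
    rw [wordCount_eq_choose_mul m c, hc, Nat.choose_one_right]
    congr 2
    ext j
    by_cases hj : j = c
    · subst hj; simp [dec, hc]
    · simp [dec, hj]
  have h4 : ∑ i ∈ (Finset.univ.filter (fun i => 0 < m i)).erase c, wordCount (dec m i) ≤
      (∑ i, m i - 1) * ∑ i ∈ Finset.univ.filter (fun i => 0 < m i), lyndonCount (dec m i) := by
    rw [Finset.mul_sum]
    refine le_trans (Finset.sum_le_sum fun i hi => ?_)
      (Finset.sum_le_sum_of_subset (Finset.erase_subset _ _))
    rw [Finset.mem_erase, Finset.mem_filter] at hi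
    have hs := sum_dec hi.2.2
    have h5 := wordCount_le_lyndonCount_add (v := dec m i) (by omega)
    rw [hg (dec m i) (by simp [dec, hc, Ne.symm hi.1])] at h5
    simpa [hs] using h5
  obtain ⟨N, hN'⟩ : ∃ N, ∑ i, m i = N + 2 := ⟨∑ i, m i - 2, by omega⟩
  rw [hN'] at h1 h3 h4
  rw [show N + 2 - 1 = N + 1 by omega] at h4
  have h6 : lyndonCount m ≤ wordCount (dec m c) := by
    rw [h3] at h1
    exact Nat.le_of_mul_le_mul_left h1 (by omega)
  change lyndonCount m ≤ _
  refine Nat.le_of_mul_le_mul_left (c := N + 1) (le_trans ?_ h4) (by omega)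
  have h7 : (N + 1) * lyndonCount m ≤ (N + 1) * wordCount (dec m c) :=
    Nat.mul_le_mul_left _ h6
  have h8 : (N + 2) * wordCount (dec m c) = (N + 1) * wordCount (dec m c) +
    wordCount (dec m c) := by ring
  omega

/-- The letters other than `c` may be rearranged in at most as many ways in degree `v / d` as in
degree `w`, so only the letter `c` matters for the comparison. -/
theorem wordCount_div_le {n : ℕ} {v w : Fin n → ℕ} {c : Fin n} {d : ℕ} (h : ∀ i, d ∣ v i)
    (hw : ∀ i, i ≠ c → v i ≤ w i) :
    wordCount (fun j => v j / d) ≤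
      ((∑ i, v i) / d).choose (v c / d) * wordCount (Function.update w c 0) := by
  rw [wordCount_eq_choose_mul _ c, sum_div_of_dvd h]
  gcongr
  refine wordCount_mono fun i => ?_
  by_cases hi : i = c
  · subst hi; simp
  · simpa [hi] using (Nat.div_le_self _ _).trans (hw i hi)

/-- The case where the chosen letter `c` occurs at least twice and at most as often as all other
letters together. The proof merges the other letters into one, which reduces everything to
`tSum_le`. -/
theorem main_of_two_le {n : ℕ} {m : Fin n → ℕ} {c : Fin n} (hc : 2 ≤ m c)
    (hN : 2 * m c ≤ ∑ i, m i) :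
    ∑ k ∈ (Finset.univ.gcd m).divisors, lyndonCount (fun j => m j / k)
      ≤ ∑ i ∈ Finset.univ.filter (fun i => 0 < m i), lyndonCount (dec m i) := by
  have hv : 0 < ∑ i, m i := by omega
  set P := Finset.univ.filter (fun i => 0 < m i) with hP
  have hcP : c ∈ P := by simp [hP]; omega
  set b := m c with hb
  obtain ⟨a, hab⟩ : ∃ a, ∑ i, m i = a + b := ⟨∑ i, m i - b, by omega⟩
  have hba : b ≤ a := by omega
  set Q := wordCount (Function.update m c 0) with hQ
  have hM : wordCount m = (a + b).choose b * Q := by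
    rw [wordCount_eq_choose_mul m c, hab]
  have hsd : ∀ i ∈ P, ∑ j, dec m i j = a + b - 1 := fun i hi => by
    rw [sum_dec (Finset.mem_filter.1 hi).2, hab]
  have hdm : ∀ i j, dec m i j ≤ m j := fun i j => Nat.sub_le _ _
  have hdc : dec m c c = b - 1 := by simp [dec, hb]
  have hdne : ∀ i j, j ≠ i → dec m i j = m j := fun i j h => by simp [dec, h]
  have hdi : ∀ i, dec m i i = m i - 1 := fun i => by simp [dec]
  -- Exponents `d ≥ 2` dividing every `m i` divide both `b` and `a`.
  have t1 : (a + b - 1) * ∑ d ∈ (Finset.univ.gcd m).divisors.erase 1,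
      d.totient * wordCount (fun j => m j / d) ≤
      ∑ d ∈ b.divisors.erase 1, (if d ∣ a then
        (a + b - 1) * d.totient * ((a + b) / d).choose (b / d) else 0) * Q := by
    rw [Finset.mul_sum]
    refine le_trans (Finset.sum_le_sum (g := fun d => (if d ∣ a then
        (a + b - 1) * d.totient * ((a + b) / d).choose (b / d) else 0) * Q) fun d hd => ?_)
      (Finset.sum_le_sum_of_subset (Finset.erase_subset_erase _ fun d hd => ?_))
    · have hd := (mem_divisors_gcd hv).1 (Finset.mem_of_mem_erase hd)
      have hda : d ∣ a := (Nat.dvd_add_left (hd c)).1 (hab ▸ Finset.dvd_sum fun i _ => hd i)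
      have h := wordCount_div_le (v := m) (w := m) (c := c) hd (fun _ _ => le_rfl)
      rw [hab] at h
      rw [if_pos hda, mul_assoc, mul_assoc]
      gcongr
    · exact Nat.mem_divisors.2 ⟨(mem_divisors_gcd hv).1 hd c, by omega⟩
  have t3 : (a + b) * ∑ d ∈ (Finset.univ.gcd (dec m c)).divisors.erase 1,
      wordCount (fun j => dec m c j / d) ≤
      ∑ d ∈ (b - 1).divisors.erase 1, (if d ∣ a then
        (a + b) * ((a + b - 1) / d).choose ((b - 1) / d) else 0) * Q := by
    have hs := hsd c hcP
    have hv' : 0 < ∑ j, dec m c j := by omega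
    rw [Finset.mul_sum]
    refine le_trans (Finset.sum_le_sum (g := fun d => (if d ∣ a then
        (a + b) * ((a + b - 1) / d).choose ((b - 1) / d) else 0) * Q) fun d hd => ?_)
      (Finset.sum_le_sum_of_subset (Finset.erase_subset_erase _ fun d hd => ?_))
    · have hd := (mem_divisors_gcd hv').1 (Finset.mem_of_mem_erase hd)
      have hdb : d ∣ b - 1 := hdc ▸ hd c
      have hda : d ∣ a := by
        refine (Nat.dvd_add_left hdb).1 ?_
        rw [show a + (b - 1) = a + b - 1 by omega, ← hs]
        exact Finset.dvd_sum fun i _ => hd i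
      have h := wordCount_div_le (v := dec m c) (w := m) (c := c) hd (fun j _ => hdm c j)
      rw [hs, hdc] at h
      rw [if_pos hda, mul_assoc]
      gcongr
    · rw [← hdc]
      exact Nat.mem_divisors.2 ⟨(mem_divisors_gcd hv').1 hd c, by omega⟩
  -- The sums over `i ≠ c` run over disjoint sets of divisors, so all of them together are
  -- bounded by a single two-letter sum.
  have t2 : (a + b) * ∑ i ∈ P.erase c, ∑ d ∈ (Finset.univ.gcd (dec m i)).divisors.erase 1,
      wordCount (fun j => dec m i j / d) ≤
      ∑ d ∈ b.divisors.erase 1, (if d ∣ a - 1 then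
        (a + b) * ((a + b - 1) / d).choose (b / d) else 0) * Q := by
    have key : ∀ i ∈ P.erase c, ∀ d ∈ (Finset.univ.gcd (dec m i)).divisors.erase 1,
        d ≠ 1 ∧ ∀ j, d ∣ dec m i j := fun i hi d hd => by
      have hs := hsd i (Finset.mem_of_mem_erase hi)
      rw [Finset.mem_erase, mem_divisors_gcd (by omega)] at hd
      exact hd
    have hdisj : (↑(P.erase c) : Set (Fin n)).PairwiseDisjoint
        fun i => (Finset.univ.gcd (dec m i)).divisors.erase 1 := by
      intro i hi i' hi' hii'
      refine Finset.disjoint_left.2 fun d hd hd' => ?_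
      -- Such a `d` would divide both `m i - 1` and `m i`.
      have h1 := (key i hi d hd).2 i
      have h2 := (key i' hi' d hd').2 i
      rw [hdi] at h1
      rw [hdne _ _ hii'] at h2
      have hmi : 0 < m i := (Finset.mem_filter.1 (Finset.mem_of_mem_erase hi)).2
      exact (key i hi d hd).1 (Nat.dvd_one.1 ((Nat.dvd_sub_iff_right hmi h2).1 h1))
    calc _ ≤ ∑ i ∈ P.erase c, ∑ d ∈ (Finset.univ.gcd (dec m i)).divisors.erase 1,
          (if d ∣ a - 1 then (a + b) * ((a + b - 1) / d).choose (b / d) else 0) * Q := by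
          simp only [Finset.mul_sum]
          refine Finset.sum_le_sum fun i hi => Finset.sum_le_sum fun d hd => ?_
          have hs := hsd i (Finset.mem_of_mem_erase hi)
          have hic := Finset.ne_of_mem_erase hi
          have hd := (key i hi d hd).2
          have hcc : dec m i c = b := hdne i c hic.symm
          have hdb : d ∣ b := hcc ▸ hd c
          have hda : d ∣ a - 1 := by
            refine (Nat.dvd_add_left hdb).1 ?_
            rw [show a - 1 + b = a + b - 1 by omega, ← hs]
            exact Finset.dvd_sum fun i _ => hd i
          have h := wordCount_div_le (v := dec m i) (w := m) (c := c) hd (fun j _ => hdm i j)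
          rw [hs, hcc] at h
          rw [if_pos hda, mul_assoc]
          gcongr
      _ = ∑ d ∈ (P.erase c).biUnion fun i => (Finset.univ.gcd (dec m i)).divisors.erase 1,
          (if d ∣ a - 1 then (a + b) * ((a + b - 1) / d).choose (b / d) else 0) * Q :=
          (Finset.sum_biUnion hdisj).symm
      _ ≤ _ := by
          refine Finset.sum_le_sum_of_subset fun d hd => ?_
          obtain ⟨i, hi, hd⟩ := Finset.mem_biUnion.1 hd
          have h := key i hi d hd
          have hic := Finset.ne_of_mem_erase hi
          refine Finset.mem_erase.2 ⟨h.1, Nat.mem_divisors.2 ⟨?_, by omega⟩⟩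
          have := h.2 c
          rwa [hdne i c hic.symm] at this
  have t : (a + b - 1) * ∑ d ∈ (Finset.univ.gcd m).divisors.erase 1,
        d.totient * wordCount (fun j => m j / d) +
      (a + b) * ∑ i ∈ P, ∑ d ∈ (Finset.univ.gcd (dec m i)).divisors.erase 1,
        wordCount (fun j => dec m i j / d) ≤ wordCount m := by
    rw [← Finset.add_sum_erase _ _ hcP, mul_add, hM]
    simp only [← Finset.sum_mul] at t1 t2 t3
    refine le_trans (b := (∑ d ∈ b.divisors.erase 1, (if d ∣ a then
        (a + b - 1) * d.totient * ((a + b) / d).choose (b / d) else 0) +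
      ∑ d ∈ b.divisors.erase 1, (if d ∣ a - 1 then
        (a + b) * ((a + b - 1) / d).choose (b / d) else 0) +
      ∑ d ∈ (b - 1).divisors.erase 1, (if d ∣ a then
        (a + b) * ((a + b - 1) / d).choose ((b - 1) / d) else 0)) * Q) ?_ ?_
    · linarith
    · refine Nat.mul_le_mul_right _ ?_
      have h := tSum_le hc hba
      rw [tSum] at h
      have hcast : ((a + b - 1 : ℕ) : ℚ) = a + b - 1 := by
        rw [Nat.cast_sub (by omega)]; push_cast; ring
      rw [← Nat.cast_le (α := ℚ)]
      push_cast [hcast]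
      exact h
  have h1 := sum_mul_sum_lyndonCount_le hv
  have hg1 : 1 ∈ (Finset.univ.gcd m).divisors :=
    Nat.one_mem_divisors.2 (gcd_ne_zero_of_sum_pos hv)
  rw [← Finset.add_sum_erase (Finset.univ.gcd m).divisors
    (fun d => d.totient * wordCount (fun j => m j / d)) hg1] at h1
  simp only [Nat.div_one, Nat.totient_one, one_mul] at h1
  have h2 : wordCount m ≤ (a + b - 1) * ∑ i ∈ P, lyndonCount (dec m i) +
      ∑ i ∈ P, ∑ d ∈ (Finset.univ.gcd (dec m i)).divisors.erase 1,
        wordCount (fun j => dec m i j / d) := by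
    rw [wordCount_pascal hv, Finset.mul_sum, ← Finset.sum_add_distrib]
    refine Finset.sum_le_sum fun i hi => ?_
    have hs := hsd i hi
    rw [← hs]
    exact wordCount_le_lyndonCount_add (by omega)
  rw [hab] at h1
  obtain ⟨k, hk⟩ : ∃ k, a + b = k + 1 := ⟨a + b - 1, by omega⟩
  rw [hk] at h1 h2 t
  rw [Nat.add_sub_cancel] at h2 t
  refine Nat.le_of_mul_le_mul_left (c := (k + 1) * k) ?_ (Nat.mul_pos (by omega) (by omega))
  have h3 := Nat.mul_le_mul_left k h1
  have h4 := Nat.mul_le_mul_left (k + 1) h2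
  linarith

/-- Let `m ∈ ℕ_0^n` with `m_s, m_t ≠ 0` for some `s < t`. Then
`Σ_{k ∣ gcd(m)} ℓ_{m/k} ≤ Σ_{i : m_i > 0} ℓ_{m − e_i}`. -/
theorem stmt11 {n : ℕ} (m : Fin n → ℕ) (s t : Fin n) (hst : s < t)
    (hs : m s ≠ 0) (ht : m t ≠ 0) :
    ∑ k ∈ (Finset.univ.gcd m).divisors, lyndonCount (fun j => m j / k)
      ≤ ∑ i ∈ Finset.univ.filter (fun i => 0 < m i),
          lyndonCount (fun j => m j - if j = i then 1 else 0) := by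
  have hsP : s ∈ Finset.univ.filter (fun i => 0 < m i) := by simp; omega
  obtain ⟨c, hc, hmin⟩ := Finset.exists_min_image _ m ⟨s, hsP⟩
  simp only [Finset.mem_filter, Finset.mem_univ, true_and] at hc hmin
  obtain ⟨c', hcc', hc'⟩ : ∃ c', c ≠ c' ∧ 0 < m c' := by
    by_cases h : c = s
    · exact ⟨t, by rw [h]; exact hst.ne, by omega⟩
    · exact ⟨s, h, by omega⟩
  have hsum : m c + m c' ≤ ∑ i, m i := by
    rw [← Finset.sum_pair hcc']
    exact Finset.sum_le_sum_of_subset (Finset.subset_univ _)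
  have := hmin c' hc'
  rcases Nat.lt_or_ge 1 (m c) with h | h
  · exact main_of_two_le (c := c) h (by omega)
  · exact main_of_eq_one (c := c) (by omega) (by omega)
end
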